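/- Let A ∈ {0,1}^{n×n} be a random symmetric adjacency matrix with zero diagonal such that A_{uv} ~ Bernoulli(P_{uv}) independently for all u > v, where P ∈ [0,1]^{n×n} is symmetric, and set p_max = max over u ≥ v of P_{uv}. For any C' > 0 there exist constants C > 0 and sufficiently large constants C1 < C2 such that, with probability at least 1 − n^{−C'}, simultaneously for all τ ∈ [C1·(n·p_max + 1), C2·(n·p_max + 1)], the operator norm bound ‖L(A_τ) − L(P_τ)‖ ≤ C·√(log(e·(n·p_max + 1))/(n·p_max + 1)) holds. -/

import Mathlib

open scoped BigOperators
open Filter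

namespace SBM

noncomputable section

/-- Adjacency matrices of graphs on `n` nodes. -/
abbrev Adj (n : ℕ) := Fin n → Fin n → Bool

/-- 0/1 real value of an entry of the adjacency matrix. -/
def aVal {n : ℕ} (A : Adj n) (u v : Fin n) : ℝ := if A u v then 1 else 0

/-- Probability weight of one adjacency matrix under the SBM with edge
probability matrix `P`: the entries above the diagonal are independent
Bernoulli, the matrix is symmetric with zero diagonal. -/
def weight {n : ℕ} (P : Matrix (Fin n) (Fin n) ℝ) (A : Adj n) : ℝ :=
  if (∀ u, A u u = false) ∧ (∀ u v, A u v = A v u) then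
    ∏ u : Fin n, ∏ v : Fin n,
      if u < v then (if A u v then P u v else 1 - P u v) else 1
  else 0

/-- Probability of a set of adjacency matrices under the SBM with edge
probability matrix `P`. -/
def prob {n : ℕ} (P : Matrix (Fin n) (Fin n) ℝ) (S : Set (Adj n)) : ℝ :=
  ∑ A : Adj n, S.indicator (weight P) A

/-- The edge probability matrix `P u v = B (σ u) (σ v)`. -/
def pMat {n k : ℕ} (B : Matrix (Fin k) (Fin k) ℝ) (σ : Fin n → Fin k) :
    Matrix (Fin n) (Fin n) ℝ := fun u v => B (σ u) (σ v)

/-- Size of the `i`-th community of a label assignment. -/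
def comSize {n k : ℕ} (σ : Fin n → Fin k) (i : Fin k) : ℝ :=
  ((Finset.univ.filter fun u => σ u = i).card : ℝ)

/-- Hamming loss `ℓ0`. -/
def l0 {n k : ℕ} (σ1 σ2 : Fin n → Fin k) : ℝ :=
  ((Finset.univ.filter fun u => σ1 u ≠ σ2 u).card : ℝ) / n

/-- Misclassification proportion: minimum of `ℓ0` over relabelings. -/
def misclass {n k : ℕ} (σh σ : Fin n → Fin k) : ℝ :=
  ⨅ π : Equiv.Perm (Fin k), l0 σh (fun u => π (σ u))

/-- Euclidean norm of a vector. -/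
def sqnorm {n : ℕ} (x : Fin n → ℝ) : ℝ := Real.sqrt (∑ i, x i ^ 2)

/-- Operator (spectral) norm of a square matrix. -/
def opNorm {n : ℕ} (M : Matrix (Fin n) (Fin n) ℝ) : ℝ :=
  sSup { t : ℝ | ∃ x : Fin n → ℝ, sqnorm x = 1 ∧ t = sqnorm (M.mulVec x) }

/-- The `k`-th largest singular value of a square matrix, via the
Courant–Fischer max-min characterization. -/
def kthSingular {n : ℕ} (M : Matrix (Fin n) (Fin n) ℝ) (k : ℕ) : ℝ :=
  sSup { t : ℝ | 0 ≤ t ∧ ∃ V : Submodule ℝ (Fin n → ℝ),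
    Module.finrank ℝ V = k ∧ ∀ x ∈ V, t * sqnorm x ≤ sqnorm (M.mulVec x) }

/-- The Rényi divergence of order 1/2, `I*`. -/
def renyiHalf (n : ℕ) (a b : ℝ) : ℝ :=
  -2 * Real.log (Real.sqrt ((a / n) * (b / n)) +
    Real.sqrt ((1 - a / n) * (1 - b / n)))

/-- The balanced parameter space `Θ₀(n,k,a,b,β)`. -/
def Theta0 (n k : ℕ) (a b β : ℝ) :
    Set (Matrix (Fin k) (Fin k) ℝ × (Fin n → Fin k)) :=
  { p | (∀ i, (n : ℝ) / (β * k) - 1 ≤ comSize p.2 i ∧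
          comSize p.2 i ≤ β * n / k + 1) ∧
        (∀ i, p.1 i i = a / n) ∧ ∀ i j, i ≠ j → p.1 i j = b / n }

/-- Average of the off-diagonal entries of a `k × k` matrix. -/
def offDiagAvg {k : ℕ} (B : Matrix (Fin k) (Fin k) ℝ) : ℝ :=
  (1 / ((k : ℝ) * ((k : ℝ) - 1))) *
    ∑ i : Fin k, ∑ j : Fin k, if i ≠ j then B i j else 0

/-- The general parameter space `Θ(n,k,a,b,λ,β;α)`. -/
def ThetaGen (n k : ℕ) (a b lam β α : ℝ) :
    Set (Matrix (Fin k) (Fin k) ℝ × (Fin n → Fin k)) :=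
  { p | (∀ i, (n : ℝ) / (β * k) - 1 ≤ comSize p.2 i ∧
          comSize p.2 i ≤ β * n / k + 1) ∧
        (∀ i j, p.1 i j = p.1 j i) ∧
        (∀ i j, 0 ≤ p.1 i j ∧ p.1 i j ≤ 1) ∧
        b / (α * n) ≤ offDiagAvg p.1 ∧
        (∀ i j, i ≠ j → p.1 i j ≤ b / n) ∧
        (∃ i j, i ≠ j ∧ p.1 i j = b / n) ∧
        (∀ i, a / n ≤ p.1 i i) ∧ (∃ i, p.1 i i = a / n) ∧
        (∀ i, p.1 i i ≤ α * a / n) ∧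
        lam ≤ kthSingular (pMat p.1 p.2) k }

/-- The estimated community `C̃ᵢᵘ` (node `u` itself is excluded). -/
def cluster {n k : ℕ} (u : Fin n) (s : Fin n → Fin k) (i : Fin k) :
    Finset (Fin n) :=
  Finset.univ.filter fun v => v ≠ u ∧ s v = i

/-- Number of edges within a set of nodes. -/
def edgesWithin {n : ℕ} (A : Adj n) (C : Finset (Fin n)) : ℝ :=
  (∑ v ∈ C, ∑ w ∈ C, aVal A v w) / 2

/-- Number of edges between two disjoint sets of nodes. -/
def edgesBetween {n : ℕ} (A : Adj n) (C D : Finset (Fin n)) : ℝ :=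
  ∑ v ∈ C, ∑ w ∈ D, aVal A v w

/-- The connectivity estimates `B̂ᵢⱼᵘ` of Algorithm 1, based on the initial
assignment `s = σ⁰ᵤ`. -/
def hatB {n k : ℕ} (A : Adj n) (u : Fin n) (s : Fin n → Fin k) (i j : Fin k) :
    ℝ :=
  if i = j then
    edgesWithin A (cluster u s i) /
      (((cluster u s i).card : ℝ) * (((cluster u s i).card : ℝ) - 1) / 2)
  else
    edgesBetween A (cluster u s i) (cluster u s j) /
      (((cluster u s i).card : ℝ) * ((cluster u s j).card : ℝ))

/-- `â_u = n · minᵢ B̂ᵢᵢᵘ`. -/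
def hata {n k : ℕ} (A : Adj n) (u : Fin n) (s : Fin n → Fin k) : ℝ :=
  n * ⨅ i : Fin k, hatB A u s i i

/-- `b̂_u = n · maxᵢ≠ⱼ B̂ᵢⱼᵘ`. -/
def hatb {n k : ℕ} (A : Adj n) (u : Fin n) (s : Fin n → Fin k) : ℝ :=
  n * sSup { x : ℝ | ∃ i j : Fin k, i ≠ j ∧ x = hatB A u s i j }

/-- `t = ½ log (â (1 − b̂/n) / (b̂ (1 − â/n)))`. -/
def tStat (n : ℕ) (ha hb : ℝ) : ℝ :=
  Real.log (ha * (1 - hb / n) / (hb * (1 - ha / n))) / 2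

/-- `ρ = −(1/(2t)) log (((â/n)e^{−t} + 1 − â/n)/((b̂/n)e^{t} + 1 − b̂/n))`. -/
def rhoStat (n : ℕ) (ha hb t : ℝ) : ℝ :=
  -(Real.log (((ha / n) * Real.exp (-t) + 1 - ha / n) /
      ((hb / n) * Real.exp t + 1 - hb / n))) / (2 * t)

/-- Penalized vote of node `u` for label `l`. -/
def vote {n k : ℕ} (A : Adj n) (u : Fin n) (s : Fin n → Fin k) (ρ : ℝ)
    (l : Fin k) : ℝ :=
  (∑ v ∈ cluster u s l, aVal A u v) - ρ * ((cluster u s l).card : ℝ)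

/-- `lbl` maximizes the penalized vote of node `u`. -/
def VoteMax {n k : ℕ} (A : Adj n) (u : Fin n) (s : Fin n → Fin k) (ρ : ℝ)
    (lbl : Fin k) : Prop :=
  ∀ l : Fin k, vote A u s ρ l ≤ vote A u s ρ lbl

/-- `|{v : σU_{u1}(v) = l} ∩ {v : σU_u(v) = σU_u(u)}|`. -/
def consensusCount {n k : ℕ} (σU : Fin n → Fin n → Fin k) (u1 u : Fin n)
    (l : Fin k) : ℕ :=
  (Finset.univ.filter fun v => σU u1 v = l ∧ σU u v = σU u u).card

/-- Specification of the refinement-plus-consensus scheme of Algorithm 1, with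
an arbitrary family of penalties `ρ`.  `σ0 u` is the initial assignment
`σ⁰ᵤ`, `σU u` is the refined assignment `σ̂ᵤ`, `σhat` is the final output. -/
def RefineSpec {n k : ℕ} (A : Adj n) (σ0 σU : Fin n → Fin n → Fin k)
    (ρ : Fin n → ℝ) (σhat : Fin n → Fin k) : Prop :=
  (∀ u v, v ≠ u → σU u v = σ0 u v) ∧
  (∀ u, VoteMax A u (σ0 u) (ρ u) (σU u u)) ∧
  ∀ hn : 0 < n,
    σhat ⟨0, hn⟩ = σU ⟨0, hn⟩ ⟨0, hn⟩ ∧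
    ∀ u, u ≠ ⟨0, hn⟩ →
      ∀ l : Fin k, consensusCount σU ⟨0, hn⟩ u l ≤
        consensusCount σU ⟨0, hn⟩ u (σhat u)

/-- Algorithm 1 with the standard data-driven penalties. -/
def AlgorithmOne {n k : ℕ} (A : Adj n) (σ0 σU : Fin n → Fin n → Fin k)
    (σhat : Fin n → Fin k) : Prop :=
  RefineSpec A σ0 σU
    (fun u => rhoStat n (hata A u (σ0 u)) (hatb A u (σ0 u))
      (tStat n (hata A u (σ0 u)) (hatb A u (σ0 u)))) σhat

/-- Algorithm 1 with the truncated `t_u` (truncation level `log (2/ε0)`). -/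
def AlgorithmOneTrunc (ε0 : ℝ) {n k : ℕ} (A : Adj n)
    (σ0 σU : Fin n → Fin n → Fin k) (σhat : Fin n → Fin k) : Prop :=
  RefineSpec A σ0 σU
    (fun u => rhoStat n (hata A u (σ0 u)) (hatb A u (σ0 u))
      (min (tStat n (hata A u (σ0 u)) (hatb A u (σ0 u)))
        (Real.log (2 / ε0)))) σhat

/-- Algorithm 1 with known `a` and `b`. -/
def AlgorithmOneKnown (a b : ℝ) {n k : ℕ} (A : Adj n)
    (σ0 σU : Fin n → Fin n → Fin k) (σhat : Fin n → Fin k) : Prop :=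
  RefineSpec A σ0 σU (fun _ => rhoStat n a b (tStat n a b)) σhat

/-- Algorithm 1 with known `a`, `b` and truncated `t_u`. -/
def AlgorithmOneKnownTrunc (a b ε0 : ℝ) {n k : ℕ} (A : Adj n)
    (σ0 σU : Fin n → Fin n → Fin k) (σhat : Fin n → Fin k) : Prop :=
  RefineSpec A σ0 σU
    (fun _ => rhoStat n a b (min (tStat n a b) (Real.log (2 / ε0)))) σhat

/-- The initializer `σ0 A u` (that is, `σ⁰ᵤ`) only uses the data `A₋ᵤ`. -/
def LocalInit {n k : ℕ} (σ0 : Adj n → Fin n → Fin n → Fin k) : Prop :=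
  ∀ (A A' : Adj n) (u : Fin n),
    (∀ v w, v ≠ u → w ≠ u → A v w = A' v w) → σ0 A u = σ0 A' u

/-- Condition 1: the initializer is, with probability at least
`1 − C0 n^{−(1+δ)}`, within misclassification proportion `γ` of the truth,
uniformly over the parameter space and the left-out node. -/
def Condition1 {n k : ℕ}
    (Θ : Set (Matrix (Fin k) (Fin k) ℝ × (Fin n → Fin k)))
    (σ0 : Adj n → Fin n → Fin n → Fin k) (C0 δ γ : ℝ) : Prop :=
  ∀ p ∈ Θ, ∀ u : Fin n,
    1 - C0 * (n : ℝ) ^ (-(1 + δ)) ≤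
      prob (pMat p.1 p.2) { A | misclass p.2 (σ0 A u) ≤ γ }

/-- Degree of a node. -/
def degree {n : ℕ} (A : Adj n) (u : Fin n) : ℝ := ∑ v, aVal A u v

/-- Average degree `d̄`. -/
def avgDeg {n : ℕ} (A : Adj n) : ℝ := (∑ u, degree A u) / n

/-- Trimming operator `T_τ`: zero out rows/columns of high-degree nodes. -/
def trim {n : ℕ} (A : Adj n) (τ : ℝ) : Matrix (Fin n) (Fin n) ℝ :=
  fun u v => if τ ≤ degree A u ∨ τ ≤ degree A v then 0 else aVal A u v

/-- Regularized adjacency matrix `A_τ = A + (τ/n)·11ᵀ`. -/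
def addReg {n : ℕ} (A : Adj n) (τ : ℝ) : Matrix (Fin n) (Fin n) ℝ :=
  fun u v => aVal A u v + τ / n

/-- Normalized Laplacian `L(M)_{uv} = M_{uv}/√(r_u r_v)`. -/
def lap {n : ℕ} (M : Matrix (Fin n) (Fin n) ℝ) : Matrix (Fin n) (Fin n) ℝ :=
  fun u v => M u v / Real.sqrt ((∑ w, M u w) * (∑ w, M v w))

/-- `U` is a matrix whose columns are orthonormal eigenvectors of `M`
corresponding to the `k` leading (largest in absolute value) eigenvalues. -/
def LeadingEigenvectors {n k : ℕ} (M : Matrix (Fin n) (Fin n) ℝ)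
    (U : Matrix (Fin n) (Fin k) ℝ) : Prop :=
  ∃ μ : Fin k → ℝ,
    (∀ i j : Fin k, (∑ u, U u i * U u j) = if i = j then (1 : ℝ) else 0) ∧
    (∀ j : Fin k, M.mulVec (fun u => U u j) = fun u => μ j * U u j) ∧
    ∀ (x : Fin n → ℝ) (c : ℝ), M.mulVec x = (fun u => c * x u) →
      (∀ j, (∑ u, x u * U u j) = 0) → x ≠ 0 → ∀ j, |c| ≤ |μ j|

/-- Distance between two rows of `U`. -/
def rowDist {n k : ℕ} (U : Matrix (Fin n) (Fin k) ℝ) (v w : Fin n) : ℝ :=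
  Real.sqrt (∑ j, (U v j - U w j) ^ 2)

/-- Number of points of `S` within distance `r` of `v`. -/
def ballCount {n k : ℕ} (U : Matrix (Fin n) (Fin k) ℝ) (r : ℝ)
    (S : Finset (Fin n)) (v : Fin n) : ℕ :=
  (S.filter fun w => rowDist U w v < r).card

/-- Specification of the greedy clustering scheme (Algorithm 2) with critical
radius `r`, applied to the rows of `U`. -/
def GreedyCluster {n k : ℕ} (U : Matrix (Fin n) (Fin k) ℝ) (r : ℝ)
    (σhat : Fin n → Fin k) : Prop :=
  ∃ (S : ℕ → Finset (Fin n)) (t : Fin k → Fin n) (Ch : Fin k → Finset (Fin n)),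
    S 0 = Finset.univ ∧
    (∀ i : Fin k,
      ((S i.val).Nonempty → t i ∈ S i.val ∧
        ∀ v ∈ S i.val,
          ballCount U r (S i.val) v ≤ ballCount U r (S i.val) (t i)) ∧
      Ch i = (S i.val).filter (fun v => rowDist U v (t i) < r) ∧
      S (i.val + 1) = S i.val \ Ch i) ∧
    (∀ i : Fin k, ∀ u ∈ Ch i, σhat u = i) ∧
    ∀ u ∈ S k, ∀ j : Fin k,
      (∑ v ∈ Ch (σhat u), rowDist U u v) / ((Ch (σhat u)).card : ℝ) ≤
        (∑ v ∈ Ch j, rowDist U u v) / ((Ch j).card : ℝ)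

/-- `σhat` is a possible output of `USC(τ)` (with tuning constant `μ`). -/
def USCOutput {n k : ℕ} (A : Adj n) (τ μ : ℝ) (σhat : Fin n → Fin k) : Prop :=
  ∃ U : Matrix (Fin n) (Fin k) ℝ,
    LeadingEigenvectors (trim A τ) U ∧
    GreedyCluster U (μ * Real.sqrt ((k : ℝ) / n)) σhat

/-- `σhat` is a possible output of `NSC(τ)` (with tuning constant `μ`). -/
def NSCOutput {n k : ℕ} (A : Adj n) (τ μ : ℝ) (σhat : Fin n → Fin k) : Prop :=
  ∃ U : Matrix (Fin n) (Fin k) ℝ,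
    LeadingEigenvectors (lap (addReg A τ)) U ∧
    GreedyCluster U (μ * Real.sqrt ((k : ℝ) / n)) σhat

/-- The initializer `σ0 A u` is obtained by applying `USC(Cτ · d̄)` to the
leave-one-out matrix `A₋ᵤ` (identified with a graph on `n − 1` nodes via an
injection `e` avoiding `u`). -/
def USCInitDeg {n k : ℕ} (Cτ μ : ℝ) (σ0 : Adj n → Fin n → Fin n → Fin k) :
    Prop :=
  ∀ (A : Adj n) (u : Fin n), ∃ (m : ℕ) (e : Fin m → Fin n) (s' : Fin m → Fin k),
    m + 1 = n ∧ Function.Injective e ∧ (∀ w, e w ≠ u) ∧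
    USCOutput (fun v w => A (e v) (e w))
      (Cτ * avgDeg (fun v w => A (e v) (e w))) μ s' ∧
    ∀ w, σ0 A u (e w) = s' w

/-- The initializer `σ0 A u` is obtained by applying `NSC(Cτ · d̄)` to `A₋ᵤ`. -/
def NSCInitDeg {n k : ℕ} (Cτ μ : ℝ) (σ0 : Adj n → Fin n → Fin n → Fin k) :
    Prop :=
  ∀ (A : Adj n) (u : Fin n), ∃ (m : ℕ) (e : Fin m → Fin n) (s' : Fin m → Fin k),
    m + 1 = n ∧ Function.Injective e ∧ (∀ w, e w ≠ u) ∧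
    NSCOutput (fun v w => A (e v) (e w))
      (Cτ * avgDeg (fun v w => A (e v) (e w))) μ s' ∧
    ∀ w, σ0 A u (e w) = s' w

/-- The initializer `σ0 A u` is obtained by applying `USC(τ)` (with a fixed
regularization level `τ`) to `A₋ᵤ`. -/
def USCInitTau {n k : ℕ} (τ μ : ℝ) (σ0 : Adj n → Fin n → Fin n → Fin k) :
    Prop :=
  ∀ (A : Adj n) (u : Fin n), ∃ (m : ℕ) (e : Fin m → Fin n) (s' : Fin m → Fin k),
    m + 1 = n ∧ Function.Injective e ∧ (∀ w, e w ≠ u) ∧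
    USCOutput (fun v w => A (e v) (e w)) τ μ s' ∧
    ∀ w, σ0 A u (e w) = s' w

/-- The initializer `σ0 A u` is obtained by applying `NSC(τ)` (with a fixed
regularization level `τ`) to `A₋ᵤ`. -/
def NSCInitTau {n k : ℕ} (τ μ : ℝ) (σ0 : Adj n → Fin n → Fin n → Fin k) :
    Prop :=
  ∀ (A : Adj n) (u : Fin n), ∃ (m : ℕ) (e : Fin m → Fin n) (s' : Fin m → Fin k),
    m + 1 = n ∧ Function.Injective e ∧ (∀ w, e w ≠ u) ∧
    NSCOutput (fun v w => A (e v) (e w)) τ μ s' ∧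
    ∀ w, σ0 A u (e w) = s' w

/-- The minimax-rate threshold `exp(−(1−coef)·n·I*/2)` for `k = 2` and
`exp(−(1−coef)·n·I*/(βk))` for `k ≥ 3`. -/
def rate (β : ℝ) (n k : ℕ) (a b coef : ℝ) : ℝ :=
  if k = 2 then Real.exp (-((1 - coef) * ((n : ℝ) * renyiHalf n a b)) / 2)
  else Real.exp (-((1 - coef) * ((n : ℝ) * renyiHalf n a b)) / (β * k))

/-- `sup_{(B,σ)∈Θ₀} P{ℓ(σ,σ̂) ≥ rate} → 0` as `n → ∞`. -/
def SupSmall0 (β : ℝ) (k : ℕ → ℕ) (a b coef : ℕ → ℝ)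
    (σhat : ∀ n, Adj n → Fin n → Fin (k n)) : Prop :=
  ∀ ε' : ℝ, 0 < ε' → ∀ᶠ n in atTop,
    ∀ p ∈ Theta0 n (k n) (a n) (b n) β,
      prob (pMat p.1 p.2)
        { A | rate β n (k n) (a n) (b n) (coef n) ≤ misclass (σhat n A) p.2 }
        ≤ ε'

/-- `sup_{(B,σ)∈Θ} P{ℓ(σ,σ̂) ≥ rate} → 0` as `n → ∞`. -/
def SupSmallGen (β α : ℝ) (k : ℕ → ℕ) (a b lam coef : ℕ → ℝ)
    (σhat : ∀ n, Adj n → Fin n → Fin (k n)) : Prop :=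
  ∀ ε' : ℝ, 0 < ε' → ∀ᶠ n in atTop,
    ∀ p ∈ ThetaGen n (k n) (a n) (b n) (lam n) β α,
      prob (pMat p.1 p.2)
        { A | rate β n (k n) (a n) (b n) (coef n) ≤ misclass (σhat n A) p.2 }
        ≤ ε'

/-- The running assumption `0 < b < a ≤ (1−ε) n`. -/
def Baseline (ε : ℝ) (n : ℕ) (a b : ℝ) : Prop :=
  0 < b ∧ b < a ∧ a ≤ (1 - ε) * n

/-- `a ≍ b`. -/
def Comparable (a b : ℕ → ℝ) : Prop :=
  ∃ c1 c2 : ℝ, 0 < c1 ∧ ∀ n, c1 * b n ≤ a n ∧ a n ≤ c2 * b n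

/-- The constant `C_ε`. -/
def Ceps (ε : ℝ) : ℝ := (10 / 3) * ((2 - ε) / ((ε / 2) * Real.log (2 / ε)))

/-- The constant `c_ε`. -/
def ceps (ε : ℝ) : ℝ := min (1 / (10 * Ceps ε)) (ε / (2 - ε))

/-- The maximal entry `p_max` of a matrix. -/
def pmax {n : ℕ} (P : Matrix (Fin n) (Fin n) ℝ) : ℝ :=
  sSup { x : ℝ | ∃ u v, x = P u v }

/-- The matrix agreeing with `M` on `J × J` and zero elsewhere. -/
def restrictM {n : ℕ} (M : Matrix (Fin n) (Fin n) ℝ) (J : Finset (Fin n)) :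
    Matrix (Fin n) (Fin n) ℝ :=
  fun u v => if u ∈ J ∧ v ∈ J then M u v else 0

/-- The real-valued adjacency matrix. -/
def adjMat {n : ℕ} (A : Adj n) : Matrix (Fin n) (Fin n) ℝ := fun u v => aVal A u v

end

end SBM

namespace SBM

open Filter

/-- The adjacency matrix is symmetric with zero diagonal. -/
def IsGraph {n : ℕ} (A : Adj n) : Prop :=
  (∀ u, A u u = false) ∧ ∀ u v, A u v = A v u

lemma weight_eq_zero_of_not_isGraph {n : ℕ} (P : Matrix (Fin n) (Fin n) ℝ) {A : Adj n}
    (hA : ¬ IsGraph A) : weight P A = 0 :=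
  if_neg hA

lemma weight_of_isGraph {n : ℕ} (P : Matrix (Fin n) (Fin n) ℝ) {A : Adj n} (hA : IsGraph A) :
    weight P A = ∏ u : Fin n, ∏ v : Fin n,
      if u < v then (if A u v then P u v else 1 - P u v) else 1 :=
  if_pos hA

lemma weight_nonneg {n : ℕ} {P : Matrix (Fin n) (Fin n) ℝ}
    (hP : ∀ u v, 0 ≤ P u v ∧ P u v ≤ 1) (A : Adj n) : 0 ≤ weight P A := by
  by_cases hA : IsGraph A
  · rw [weight_of_isGraph P hA]
    refine Finset.prod_nonneg fun u _ => Finset.prod_nonneg fun v _ => ?_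
    have := hP u v
    split_ifs <;> linarith
  · rw [weight_eq_zero_of_not_isGraph P hA]

/-- Independence of the entries above the diagonal, in product form. -/
lemma sum_weight_mul_prod {n : ℕ} (P : Matrix (Fin n) (Fin n) ℝ)
    (g : Fin n → Fin n → Bool → ℝ) :
    ∑ A : Adj n, weight P A * ∏ u, ∏ v, (if u < v then g u v (A u v) else 1) =
      ∏ u, ∏ v, if u < v then P u v * g u v true + (1 - P u v) * g u v false else 1 := by
  classical
  let h : Fin n → Fin n → Bool → ℝ := fun u v b =>
    if u < v then (if b then P u v else 1 - P u v) * g u v b else if b then 0 else 1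
  have hrhs : (∏ u, ∏ v, if u < v then P u v * g u v true + (1 - P u v) * g u v false else 1) =
      ∑ B : Adj n, ∏ u, ∏ v, h u v (B u v) := by
    have h1 : ∀ u v, (if u < v then P u v * g u v true + (1 - P u v) * g u v false else 1) =
        ∑ b : Bool, h u v b := by
      intro u v
      by_cases huv : u < v <;> simp [h, huv]
    simp_rw [h1, Finset.prod_univ_sum, Fintype.piFinset_univ]
  rw [hrhs]
  have hl : ∑ A : Adj n, weight P A * ∏ u, ∏ v, (if u < v then g u v (A u v) else 1) =
      ∑ A : Adj n with IsGraph A,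
        weight P A * ∏ u, ∏ v, (if u < v then g u v (A u v) else 1) := by
    refine (Finset.sum_filter_of_ne fun A _ hA => ?_).symm
    by_contra hc
    exact hA (by rw [weight_eq_zero_of_not_isGraph P hc, zero_mul])
  have hr : ∑ B : Adj n, ∏ u, ∏ v, h u v (B u v) =
      ∑ B : Adj n with (∀ u v, ¬ u < v → B u v = false), ∏ u, ∏ v, h u v (B u v) := by
    refine (Finset.sum_filter_of_ne fun B _ hB => ?_).symm
    intro u v huv
    by_contra hc
    refine hB (Finset.prod_eq_zero (Finset.mem_univ u)
      (Finset.prod_eq_zero (Finset.mem_univ v) ?_))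
    simp [h, huv, hc]
  rw [hl, hr]
  refine Finset.sum_nbij' (fun A u v => if u < v then A u v else false)
    (fun B u v => if u < v then B u v else if v < u then B v u else false) ?_ ?_ ?_ ?_ ?_
  · intro A _
    simp +contextual
  · intro B _
    refine Finset.mem_filter.2 ⟨Finset.mem_univ _, by simp, fun u v => ?_⟩
    rcases lt_trichotomy u v with huv | rfl | huv
    · simp [huv, huv.not_gt]
    · simp
    · simp [huv, huv.not_gt]
  · intro A hA
    obtain ⟨hd, hs⟩ := (Finset.mem_filter.1 hA).2
    funext u v
    rcases lt_trichotomy u v with huv | rfl | huv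
    · simp [huv]
    · simp [hd]
    · simp [huv, huv.not_gt, hs u v]
  · intro B hB
    have hB := (Finset.mem_filter.1 hB).2
    funext u v
    by_cases huv : u < v
    · simp [huv]
    · simp [huv, hB u v huv]
  · intro A hA
    rw [weight_of_isGraph P (Finset.mem_filter.1 hA).2, ← Finset.prod_mul_distrib]
    refine Finset.prod_congr rfl fun u _ => ?_
    rw [← Finset.prod_mul_distrib]
    refine Finset.prod_congr rfl fun v _ => ?_
    by_cases huv : u < v <;> simp [h, huv]

lemma sum_weight {n : ℕ} (P : Matrix (Fin n) (Fin n) ℝ) : ∑ A : Adj n, weight P A = 1 := by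
  simpa using sum_weight_mul_prod P fun _ _ _ => 1

lemma exp_sub_one_sub_le (x : ℝ) : Real.exp x - 1 - x ≤ x ^ 2 * Real.exp |x| := by
  have h1 := Real.add_one_le_exp (-x)
  have h2 : Real.exp (-x) * Real.exp x = 1 := by rw [← Real.exp_add]; simp
  have h3 := Real.add_one_le_exp x
  have h4 := Real.exp_pos x
  have h5 : Real.exp x - 1 ≤ x * Real.exp x := by nlinarith
  rcases le_total 0 x with hx | hx
  · rw [abs_of_nonneg hx]
    nlinarith
  · have h6 : 1 ≤ Real.exp |x| := Real.one_le_exp (abs_nonneg x)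
    nlinarith [sq_nonneg x]

lemma bernoulli_mgf_le {p : ℝ} (hp : 0 ≤ p) (c : ℝ) :
    p * Real.exp (c * (1 - p)) + (1 - p) * Real.exp (c * (0 - p)) ≤
      Real.exp (p * (c ^ 2 * Real.exp |c|)) := by
  have h1 : p * Real.exp (c * (1 - p)) + (1 - p) * Real.exp (c * (0 - p)) =
      Real.exp (-(c * p)) * (p * (Real.exp c - 1) + 1) := by
    have : Real.exp (c * (1 - p)) = Real.exp (-(c * p)) * Real.exp c := by
      rw [← Real.exp_add]; ring_nf
    rw [this]; ring_nf
  rw [h1]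
  calc Real.exp (-(c * p)) * (p * (Real.exp c - 1) + 1)
      ≤ Real.exp (-(c * p)) * Real.exp (p * (Real.exp c - 1)) := by
        gcongr
        exact Real.add_one_le_exp _
    _ = Real.exp (p * (Real.exp c - 1 - c)) := by rw [← Real.exp_add]; ring_nf
    _ ≤ _ := by
        gcongr
        exact exp_sub_one_sub_le c

/-- Bound for the moment generating function of a linear statistic of the centred edges. -/
lemma sum_weight_mul_exp_le {n : ℕ} {P : Matrix (Fin n) (Fin n) ℝ}
    (hP : ∀ u v, 0 ≤ P u v ∧ P u v ≤ 1) (c : Fin n → Fin n → ℝ) :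
    ∑ A : Adj n, weight P A *
        Real.exp (∑ u, ∑ v, if u < v then c u v * (aVal A u v - P u v) else 0) ≤
      Real.exp (∑ u, ∑ v, if u < v then P u v * (c u v ^ 2 * Real.exp |c u v|) else 0) := by
  have h1 : ∀ A : Adj n,
      Real.exp (∑ u, ∑ v, if u < v then c u v * (aVal A u v - P u v) else 0) =
        ∏ u, ∏ v, if u < v then
          (fun b : Bool => Real.exp (c u v * ((if b then 1 else 0) - P u v))) (A u v) else 1 := by
    intro A
    simp_rw [Real.exp_sum, aVal]
    refine Finset.prod_congr rfl fun u _ => Finset.prod_congr rfl fun v _ => ?_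
    split_ifs <;> simp
  simp_rw [h1]
  rw [sum_weight_mul_prod P
    (fun u v (b : Bool) => Real.exp (c u v * ((if b then 1 else 0) - P u v)))]
  simp_rw [Real.exp_sum]
  have hnn : ∀ u v, 0 ≤ if u < v then P u v * Real.exp (c u v * ((if true then 1 else 0) - P u v))
      + (1 - P u v) * Real.exp (c u v * ((if false then 1 else 0) - P u v)) else 1 := by
    intro u v
    have := hP u v
    have := sub_nonneg.2 this.2
    split_ifs <;> positivity [(hP u v).1]
  refine Finset.prod_le_prod (fun u _ => Finset.prod_nonneg fun v _ => ?_) fun u _ =>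
    Finset.prod_le_prod (fun v _ => ?_) fun v _ => ?_
  · exact hnn u v
  · exact hnn u v
  · by_cases huv : u < v
    · simpa [huv] using bernoulli_mgf_le (hP u v).1 (c u v)
    · simp [huv]

/-- The double sum of a symmetric matrix without its diagonal, as a sum over `u < v`. -/
lemma sum_offDiag_eq_sum_lt {n : ℕ} {M : Fin n → Fin n → ℝ} (hM : ∀ u v, M u v = M v u)
    (x y : Fin n → ℝ) :
    ∑ u, ∑ v, x u * y v * (if u = v then 0 else M u v) =
      ∑ u, ∑ v, if u < v then (x u * y v + x v * y u) * M u v else 0 := by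
  have h1 : ∀ u v, x u * y v * (if u = v then 0 else M u v) =
      (if u < v then x u * y v * M u v else 0) + if v < u then x u * y v * M v u else 0 := by
    intro u v
    rcases lt_trichotomy u v with huv | rfl | huv
    · simp [huv, huv.ne, huv.not_gt]
    · simp
    · simp [huv, huv.ne', huv.not_gt, hM u v]
  simp_rw [h1, Finset.sum_add_distrib]
  rw [Finset.sum_comm (f := fun u v => if v < u then x u * y v * M v u else 0),
    ← Finset.sum_add_distrib]
  refine Finset.sum_congr rfl fun u _ => ?_
  rw [← Finset.sum_add_distrib]
  refine Finset.sum_congr rfl fun v _ => ?_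
  split_ifs <;> ring

/-- The centred number of edges (with orientation) from `S` to `T`, omitting the diagonal. -/
def centredEdges {n : ℕ} (P : Matrix (Fin n) (Fin n) ℝ) (S T : Finset (Fin n)) (A : Adj n) : ℝ :=
  ∑ u ∈ S, ∑ v ∈ T, if u = v then 0 else aVal A u v - P u v

lemma centredEdges_eq_sum_lt {n : ℕ} {P : Matrix (Fin n) (Fin n) ℝ}
    (hsymm : ∀ u v, P u v = P v u) (S T : Finset (Fin n)) {A : Adj n} (hA : IsGraph A) :
    centredEdges P S T A = ∑ u, ∑ v, if u < v then
      ((S : Set (Fin n)).indicator 1 u * (T : Set (Fin n)).indicator 1 v +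
        (S : Set (Fin n)).indicator 1 v * (T : Set (Fin n)).indicator 1 u) *
        (aVal A u v - P u v) else 0 := by
  rw [← sum_offDiag_eq_sum_lt (M := fun u v => aVal A u v - P u v)]
  · rw [centredEdges, ← Finset.univ_inter S, ← Finset.sum_ite_mem]
    refine Finset.sum_congr rfl fun u _ => ?_
    by_cases hu : u ∈ S
    · rw [if_pos hu, ← Finset.univ_inter T, ← Finset.sum_ite_mem]
      refine Finset.sum_congr rfl fun v _ => ?_
      by_cases hv : v ∈ T <;> simp [hu, hv]
    · simp [hu]
  · intro u v
    simp [aVal, hA.2 u v, hsymm u v]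

lemma sum_weight_mul_exp_centredEdges_le {n : ℕ} {P : Matrix (Fin n) (Fin n) ℝ}
    (hsymm : ∀ u v, P u v = P v u) (hP : ∀ u v, 0 ≤ P u v ∧ P u v ≤ 1)
    {p : ℝ} (hp : ∀ u v, P u v ≤ p) (S T : Finset (Fin n)) (θ : ℝ) :
    ∑ A : Adj n, weight P A * Real.exp (θ * centredEdges P S T A) ≤
      Real.exp (2 * (p * S.card * T.card) * (θ ^ 2 * Real.exp (2 * |θ|))) := by
  classical
  let x : Fin n → ℝ := (S : Set (Fin n)).indicator 1
  let y : Fin n → ℝ := (T : Set (Fin n)).indicator 1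
  have hx : ∀ u, x u = 0 ∨ x u = 1 := fun u => by
    by_cases h : u ∈ S <;> simp [x, h]
  have hy : ∀ u, y u = 0 ∨ y u = 1 := fun u => by
    by_cases h : u ∈ T <;> simp [y, h]
  have hxs : ∑ u, x u = S.card := by simp [x, Set.indicator_apply]
  have hys : ∑ u, y u = T.card := by simp [y, Set.indicator_apply]
  let c : Fin n → Fin n → ℝ := fun u v => θ * (x u * y v + x v * y u)
  have h1 : ∀ A : Adj n, weight P A * Real.exp (θ * centredEdges P S T A) = weight P A *
      Real.exp (∑ u, ∑ v, if u < v then c u v * (aVal A u v - P u v) else 0) := by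
    intro A
    by_cases hA : IsGraph A
    · rw [centredEdges_eq_sum_lt hsymm S T hA, Finset.mul_sum]
      congr 2
      refine Finset.sum_congr rfl fun u _ => ?_
      rw [Finset.mul_sum]
      refine Finset.sum_congr rfl fun v _ => ?_
      rw [mul_ite, mul_zero]
      simp only [c, x, y, mul_assoc]
    · simp [weight_eq_zero_of_not_isGraph P hA]
  simp_rw [h1]
  refine (sum_weight_mul_exp_le hP c).trans (Real.exp_le_exp.2 ?_)
  set E := θ ^ 2 * Real.exp (2 * |θ|) with hE
  have hE0 : 0 ≤ E := by positivity
  have h2 : ∀ u v, (if u < v then P u v * (c u v ^ 2 * Real.exp |c u v|) else 0) ≤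
      if u < v then 2 * p * E * (x u * y v + x v * y u) else 0 := by
    intro u v
    split_ifs with huv
    · have hq : x u * y v + x v * y u = 0 ∨ x u * y v + x v * y u = 1 ∨
          x u * y v + x v * y u = 2 := by
        rcases hx u with h | h <;> rcases hx v with h' | h' <;> rcases hy u with k | k <;>
          rcases hy v with k' | k' <;> norm_num [h, h', k, k']
      have hq0 : 0 ≤ x u * y v + x v * y u := by
        rcases hq with h | h | h <;> rw [h] <;> norm_num
      have hq2 : x u * y v + x v * y u ≤ 2 := by
        rcases hq with h | h | h <;> rw [h] <;> norm_num
      have hc : |c u v| ≤ 2 * |θ| := by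
        simp only [c, abs_mul, abs_of_nonneg hq0]
        nlinarith [abs_nonneg θ]
      have hc2 : c u v ^ 2 ≤ 2 * (x u * y v + x v * y u) * θ ^ 2 := by
        simp only [c, mul_pow]
        nlinarith [mul_nonneg (mul_nonneg hq0 (sub_nonneg.2 hq2)) (sq_nonneg θ)]
      calc P u v * (c u v ^ 2 * Real.exp |c u v|)
          ≤ p * (2 * (x u * y v + x v * y u) * θ ^ 2 * Real.exp (2 * |θ|)) := by
            have hp0 : 0 ≤ p := (hP u v).1.trans (hp u v)
            gcongr
            exact hp u v
        _ = 2 * p * E * (x u * y v + x v * y u) := by rw [hE]; ring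
    · exact le_rfl
  calc ∑ u, ∑ v, (if u < v then P u v * (c u v ^ 2 * Real.exp |c u v|) else 0)
      ≤ ∑ u, ∑ v, if u < v then 2 * p * E * (x u * y v + x v * y u) else 0 :=
        Finset.sum_le_sum fun u _ => Finset.sum_le_sum fun v _ => h2 u v
    _ = ∑ u, ∑ v, x u * y v * (if u = v then 0 else 2 * p * E) := by
        rw [sum_offDiag_eq_sum_lt (fun _ _ => rfl)]
        simp_rw [mul_comm]
    _ ≤ ∑ u, ∑ v, x u * y v * (2 * p * E) := by
        refine Finset.sum_le_sum fun u _ => Finset.sum_le_sum fun v _ => ?_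
        have hp0 : 0 ≤ p := (hP u v).1.trans (hp u v)
        have : 0 ≤ x u * y v := by
          rcases hx u with h | h <;> rcases hy v with h' | h' <;> norm_num [h, h']
        split_ifs
        · rw [mul_zero]; positivity
        · exact le_rfl
    _ = 2 * (p * S.card * T.card) * E := by
        rw [← hxs, ← hys, mul_assoc p, Finset.sum_mul_sum]
        simp_rw [← Finset.sum_mul]
        ring

/-- `|S| ≤ t` holds for at most `(e n / t) ^ t` subsets of `Fin n`. -/
lemma card_filter_card_le {n t : ℕ} (ht : 0 < t) (htn : t ≤ n) :
    ((Finset.univ.filter fun S : Finset (Fin n) => S.card ≤ t).card : ℝ) ≤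
      Real.exp (t * (1 + Real.log (n / t))) := by
  have ht' : (0 : ℝ) < t := by exact_mod_cast ht
  have hn' : (0 : ℝ) < n := ht'.trans_le (by exact_mod_cast htn)
  have hq : (0 : ℝ) < t / n := by positivity
  have hq1 : (t : ℝ) / n ≤ 1 := (div_le_one hn').2 (by exact_mod_cast htn)
  have h1 : ∑ S : Finset (Fin n), ((t : ℝ) / n) ^ S.card = ((t : ℝ) / n + 1) ^ n := by
    simpa using Fintype.sum_pow_mul_eq_add_pow (Fin n) ((t : ℝ) / n) 1
  have h2 : ((Finset.univ.filter fun S : Finset (Fin n) => S.card ≤ t).card : ℝ) *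
      ((t : ℝ) / n) ^ t ≤ ((t : ℝ) / n + 1) ^ n := by
    rw [← h1, ← nsmul_eq_mul, ← Finset.sum_const]
    refine (Finset.sum_le_sum fun S hS => ?_).trans
      (Finset.sum_le_sum_of_subset_of_nonneg (Finset.filter_subset _ _) fun _ _ _ => by positivity)
    exact pow_le_pow_of_le_one hq.le hq1 (Finset.mem_filter.1 hS).2
  have h3 : ((t : ℝ) / n + 1) ^ n ≤ Real.exp t := by
    calc ((t : ℝ) / n + 1) ^ n ≤ Real.exp (t / n) ^ n := by
          gcongr
          exact Real.add_one_le_exp _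
      _ = Real.exp t := by rw [← Real.exp_nat_mul]; congr 1; field_simp
  have h4 : ((t : ℝ) / n) ^ t = Real.exp (-(t * Real.log (n / t))) := by
    rw [← mul_neg, ← Real.log_inv, inv_div, Real.exp_nat_mul, Real.exp_log hq]
  rw [h4, Real.exp_neg, ← div_eq_mul_inv, div_le_iff₀ (Real.exp_pos _)] at h2
  refine h2.trans ?_
  rw [mul_add, mul_one, Real.exp_add]
  gcongr

lemma log_le_mul_one_add_log {n t : ℕ} (ht : 0 < t) (htn : t ≤ n) :
    Real.log n ≤ t * (1 + Real.log (n / t)) := by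
  have ht' : (1 : ℝ) ≤ t := by exact_mod_cast ht
  have hn' : (t : ℝ) ≤ n := by exact_mod_cast htn
  rw [Real.log_div (by linarith) (by linarith)]
  have h1 : Real.log t ≤ Real.log n := Real.log_le_log (by positivity) hn'
  have h2 := Real.log_le_sub_one_of_pos (show (0 : ℝ) < t by positivity)
  nlinarith

/-- The discrepancy scale of a pair of sets with `s` and `t` elements. -/
noncomputable def discScale (n : ℕ) (d s t : ℝ) : ℝ := t + Real.sqrt (d * s * t) * (t / n) ^ (1 / 4 : ℝ)

/-- The Chernoff parameter used for pairs of sets with `s` and `t` elements. -/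
noncomputable def chernoffParam (n : ℕ) (d s t : ℝ) : ℝ :=
  (1 + Real.log (n / t)) / 8 * (t / discScale n d s t)

lemma le_discScale {n : ℕ} {d s t : ℝ} (ht : 0 ≤ t) : t ≤ discScale n d s t := by
  unfold discScale
  have : 0 ≤ (t / n) ^ (1 / 4 : ℝ) := by positivity
  nlinarith [mul_nonneg (Real.sqrt_nonneg (d * s * t)) this]

lemma chernoffParam_nonneg {n : ℕ} {d s t : ℝ} (ht : 0 < t) (htn : t ≤ n) :
    0 ≤ chernoffParam n d s t := by
  have h : 0 ≤ Real.log (n / t) := Real.log_nonneg ((one_le_div ht).2 htn)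
  have := ht.le.trans (le_discScale (n := n) (d := d) (s := s) ht.le)
  unfold chernoffParam
  positivity

lemma chernoffParam_mul_discScale {n : ℕ} {d s t : ℝ} (ht : 0 < t) :
    chernoffParam n d s t * discScale n d s t = t * (1 + Real.log (n / t)) / 8 := by
  have := ht.trans_le (le_discScale (n := n) (d := d) (s := s) ht.le)
  unfold chernoffParam
  field_simp

lemma chernoffParam_variance_le {n : ℕ} {d s t : ℝ} (hd : 0 ≤ d) (hs : 0 ≤ s) (ht : 0 < t)
    (htn : t ≤ n) :
    2 * (d / n * s * t) * (chernoffParam n d s t ^ 2 * Real.exp (2 * chernoffParam n d s t)) ≤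
      t * (1 + Real.log (n / t)) / 4 := by
  have hn : (0 : ℝ) < n := ht.trans_le htn
  set L := 1 + Real.log (n / t) with hL
  have hL1 : 1 ≤ L := by
    have : 0 ≤ Real.log (n / t) := Real.log_nonneg ((one_le_div ht).2 htn)
    linarith
  set r : ℝ := (t / n) ^ (1 / 4 : ℝ) with hr
  set D := discScale n d s t with hD
  set θ := chernoffParam n d s t with hθ
  have hr0 : 0 < r := by positivity
  have hr4 : r ^ 4 = t / n := by
    rw [hr, ← Real.rpow_natCast, ← Real.rpow_mul (by positivity)]
    norm_num
  have htD : t ≤ D := le_discScale ht.le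
  have hD0 : 0 < D := ht.trans_le htD
  have hrL : r * Real.exp (L / 4) = Real.exp (1 / 4) := by
    rw [hr, Real.rpow_def_of_pos (by positivity), ← Real.exp_add, hL,
      Real.log_div ht.ne' hn.ne', Real.log_div hn.ne' ht.ne']
    congr 1
    ring
  have hθ' : θ = L / 8 * (t / D) := rfl
  have hθL : θ ≤ L / 8 := by
    rw [hθ']
    exact mul_le_of_le_one_right (by positivity) ((div_le_one hD0).2 htD)
  have hsq : d * s * t * r ^ 2 ≤ D ^ 2 := by
    have h1 : Real.sqrt (d * s * t) * r ≤ D := by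
      rw [hD, discScale]
      linarith
    calc d * s * t * r ^ 2 = (Real.sqrt (d * s * t) * r) ^ 2 := by
          rw [mul_pow, Real.sq_sqrt (by positivity)]
      _ ≤ D ^ 2 := by gcongr
  have hvar : d / n * s * t * θ ^ 2 ≤ L ^ 2 / 64 * (t * r ^ 2) := by
    have h1 : d / n * s * t * t ^ 2 ≤ t * r ^ 2 * D ^ 2 := by
      calc d / n * s * t * t ^ 2 = t * (d * s * t) * (t / n) := by field_simp
        _ = t * r ^ 2 * (d * s * t * r ^ 2) := by rw [← hr4]; ring
        _ ≤ t * r ^ 2 * D ^ 2 := by gcongr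
    calc d / n * s * t * θ ^ 2 = L ^ 2 / 64 * (d / n * s * t * t ^ 2 / D ^ 2) := by
          rw [hθ']; field_simp; norm_num
      _ ≤ L ^ 2 / 64 * (t * r ^ 2) := by
          gcongr
          exact (div_le_iff₀ (by positivity)).2 h1
  have hexp : Real.exp (2 * θ) ≤ Real.exp (L / 4) := Real.exp_le_exp.2 (by linarith)
  have hL4 : L ≤ 4 * Real.exp (L / 4) := by
    have := Real.add_one_le_exp (L / 4)
    linarith
  have he : Real.exp (1 / 4) ^ 2 ≤ 2 := by
    have h1 : (Real.exp (1 / 4) ^ 2) ^ 2 = Real.exp 1 := by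
      rw [← pow_mul, ← Real.exp_nat_mul]
      norm_num
    have h2 := Real.exp_one_lt_d9
    nlinarith [Real.exp_pos (1 / 4)]
  calc 2 * (d / n * s * t) * (θ ^ 2 * Real.exp (2 * θ))
      = 2 * (d / n * s * t * θ ^ 2) * Real.exp (2 * θ) := by ring
    _ ≤ 2 * (L ^ 2 / 64 * (t * r ^ 2)) * Real.exp (L / 4) := by gcongr
    _ = t * L * r * (r * Real.exp (L / 4)) * L / 32 := by ring
    _ ≤ t * L * r * (r * Real.exp (L / 4)) * (4 * Real.exp (L / 4)) / 32 := by gcongr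
    _ = t * L * (r * Real.exp (L / 4)) ^ 2 / 8 := by ring
    _ ≤ t * L * 2 / 8 := by rw [hrL]; gcongr
    _ = t * L / 4 := by ring

lemma sum_weight_mul_exp_tail_le {n : ℕ} {P : Matrix (Fin n) (Fin n) ℝ}
    (hsymm : ∀ u v, P u v = P v u) (hP : ∀ u v, 0 ≤ P u v ∧ P u v ≤ 1)
    {d : ℝ} (hp : ∀ u v, P u v ≤ d / n) (hd : 0 ≤ d) {κ : ℝ} {S T : Finset (Fin n)}
    (hT : T.Nonempty) {σ : ℝ} (hσ : |σ| = 1) :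
    ∑ A : Adj n, weight P A * Real.exp (σ * chernoffParam n d S.card T.card * centredEdges P S T A -
        chernoffParam n d S.card T.card * ((8 * κ + 2) * discScale n d S.card T.card)) ≤
      Real.exp (-(κ * (T.card * (1 + Real.log (n / T.card))))) := by
  have ht : (0 : ℝ) < T.card := by exact_mod_cast hT.card_pos
  have htn : (T.card : ℝ) ≤ n := by exact_mod_cast (Finset.card_le_univ T).trans_eq (by simp)
  set θ := chernoffParam n d S.card T.card
  have hθ0 : 0 ≤ θ := chernoffParam_nonneg ht htn
  have habs : |σ * θ| = θ := by rw [abs_mul, hσ, one_mul, abs_of_nonneg hθ0]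
  have h1 := sum_weight_mul_exp_centredEdges_le hsymm hP hp S T (σ * θ)
  rw [habs, ← sq_abs, habs] at h1
  have h2 := h1.trans (Real.exp_le_exp.2 (chernoffParam_variance_le hd (Nat.cast_nonneg _) ht htn))
  simp_rw [Real.exp_sub, ← mul_div_assoc, ← Finset.sum_div]
  rw [div_le_iff₀ (Real.exp_pos _), ← Real.exp_add]
  refine h2.trans (Real.exp_le_exp.2 ?_)
  have h3 : θ * ((8 * κ + 2) * discScale n d S.card T.card) =
      (8 * κ + 2) * (T.card * (1 + Real.log (n / T.card)) / 8) := by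
    rw [← chernoffParam_mul_discScale (d := d) (s := S.card) ht]
    ring
  rw [h3]
  exact le_of_eq (by ring)

/-- All pairs of vertex sets have discrepancy at most `K` times the scale. -/
def LowDiscrepancy {n : ℕ} (P : Matrix (Fin n) (Fin n) ℝ) (d K : ℝ) (A : Adj n) : Prop :=
  ∀ S T : Finset (Fin n), S.card ≤ T.card → T.Nonempty →
    |centredEdges P S T A| ≤ K * discScale n d S.card T.card

lemma sum_exp_neg_le {n : ℕ} {κ : ℝ} (hκ : 2 ≤ κ) :
    ∑ T : Finset (Fin n) with T.Nonempty, ∑ S : Finset (Fin n) with S.card ≤ T.card,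
      Real.exp (-(κ * (T.card * (1 + Real.log (n / T.card))))) ≤
        n * (n : ℝ) ^ (-(κ - 2)) := by
  rcases Nat.eq_zero_or_pos n with rfl | hn
  · simp [Finset.eq_empty_of_isEmpty]
  have hn' : (0 : ℝ) < n := by exact_mod_cast hn
  set h : ℕ → ℝ := fun t => t * (1 + Real.log (n / t)) with hh
  have h1 : ∀ T : Finset (Fin n), T.Nonempty →
      ∑ S : Finset (Fin n) with S.card ≤ T.card, Real.exp (-(κ * h T.card)) ≤
        Real.exp (-((κ - 1) * h T.card)) := by
    intro T hT
    have htn : T.card ≤ n := (Finset.card_le_univ T).trans_eq (by simp)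
    rw [Finset.sum_const, nsmul_eq_mul]
    calc _ ≤ Real.exp (h T.card) * Real.exp (-(κ * h T.card)) := by
          gcongr
          exact card_filter_card_le hT.card_pos htn
      _ = _ := by rw [← Real.exp_add]; ring_nf
  have h2 : ∑ T : Finset (Fin n) with T.Nonempty, Real.exp (-((κ - 1) * h T.card)) =
      ∑ t ∈ Finset.Icc 1 n, ∑ T : Finset (Fin n) with T.card = t,
        Real.exp (-((κ - 1) * h t)) := by
    rw [← Finset.sum_fiberwise_of_maps_to (t := Finset.Icc 1 n) (g := Finset.card)]
    · refine Finset.sum_congr rfl fun t ht => ?_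
      rw [Finset.filter_filter]
      have h0 : (Finset.univ.filter fun T : Finset (Fin n) => T.Nonempty ∧ T.card = t) =
          Finset.univ.filter fun T : Finset (Fin n) => T.card = t := by
        refine Finset.filter_congr fun T _ => and_iff_right_of_imp fun hT => ?_
        have := (Finset.mem_Icc.1 ht).1
        exact Finset.card_pos.1 (by omega)
      rw [h0]
      exact Finset.sum_congr rfl fun T hT => by rw [(Finset.mem_filter.1 hT).2]
    · intro T hT
      exact Finset.mem_Icc.2 ⟨(Finset.mem_filter.1 hT).2.card_pos,
        (Finset.card_le_univ T).trans_eq (by simp)⟩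
  have h3 : ∀ t ∈ Finset.Icc 1 n, ∑ T : Finset (Fin n) with T.card = t,
      Real.exp (-((κ - 1) * h t)) ≤ (n : ℝ) ^ (-(κ - 2)) := by
    intro t ht
    obtain ⟨ht1, htn⟩ := Finset.mem_Icc.1 ht
    rw [Finset.sum_const, nsmul_eq_mul]
    calc _ ≤ Real.exp (h t) * Real.exp (-((κ - 1) * h t)) := by
          gcongr
          refine le_trans ?_ (card_filter_card_le ht1 htn)
          exact_mod_cast Finset.card_le_card
            (Finset.monotone_filter_right _ fun T _ hT => le_of_eq hT)
      _ = Real.exp (-((κ - 2) * h t)) := by rw [← Real.exp_add]; ring_nf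
      _ ≤ Real.exp (-((κ - 2) * Real.log n)) := by
          have := log_le_mul_one_add_log ht1 htn
          gcongr
      _ = (n : ℝ) ^ (-(κ - 2)) := by
          rw [Real.rpow_def_of_pos hn']
          ring_nf
  calc _ ≤ ∑ T : Finset (Fin n) with T.Nonempty, Real.exp (-((κ - 1) * h T.card)) :=
        Finset.sum_le_sum fun T hT => h1 T (Finset.mem_filter.1 hT).2
    _ = _ := h2
    _ ≤ ∑ t ∈ Finset.Icc 1 n, (n : ℝ) ^ (-(κ - 2)) := Finset.sum_le_sum h3
    _ = n * (n : ℝ) ^ (-(κ - 2)) := by simp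

lemma one_sub_le_prob_lowDiscrepancy {n : ℕ} (hn : 2 ≤ n) {P : Matrix (Fin n) (Fin n) ℝ}
    (hsymm : ∀ u v, P u v = P v u) (hP : ∀ u v, 0 ≤ P u v ∧ P u v ≤ 1)
    {d : ℝ} (hp : ∀ u v, P u v ≤ d / n) (hd : 0 ≤ d) {c : ℝ} (hc : 0 < c) :
    1 - (n : ℝ) ^ (-c) ≤
      prob P {A | IsGraph A ∧ LowDiscrepancy P d (8 * (c + 4) + 2) A} := by
  classical
  set κ := c + 4 with hκ
  set G : Set (Adj n) := {A | IsGraph A ∧ LowDiscrepancy P d (8 * κ + 2) A} with hG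
  set f : ℝ → Finset (Fin n) → Finset (Fin n) → Adj n → ℝ := fun σ T S A =>
    Real.exp (σ * chernoffParam n d S.card T.card * centredEdges P S T A -
      chernoffParam n d S.card T.card * ((8 * κ + 2) * discScale n d S.card T.card)) with hf
  set Z : Adj n → ℝ := fun A => ∑ T : Finset (Fin n) with T.Nonempty,
    ∑ S : Finset (Fin n) with S.card ≤ T.card, (f 1 T S A + f (-1) T S A) with hZ
  have hf0 : ∀ σ T S A, 0 < f σ T S A := fun σ T S A => Real.exp_pos _
  have hZ0 : ∀ A, 0 ≤ Z A := fun A => Finset.sum_nonneg fun T _ => Finset.sum_nonneg fun S _ =>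
    (add_pos (hf0 _ _ _ _) (hf0 _ _ _ _)).le
  have hbad : ∀ A, weight P A ≤ G.indicator (weight P) A + weight P A * Z A := by
    intro A
    have hw := weight_nonneg hP A
    by_cases hA : A ∈ G
    · rw [Set.indicator_of_mem hA]
      linarith [mul_nonneg hw (hZ0 A)]
    rw [Set.indicator_of_notMem hA, zero_add]
    by_cases hgr : IsGraph A
    · have hlow : ¬ LowDiscrepancy P d (8 * κ + 2) A := fun h => hA ⟨hgr, h⟩
      simp only [LowDiscrepancy] at hlow
      push Not at hlow
      obtain ⟨S, T, hST, hT, hlt⟩ := hlow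
      refine le_mul_of_one_le_right hw ?_
      have ht : (0 : ℝ) < T.card := by exact_mod_cast hT.card_pos
      have htn : (T.card : ℝ) ≤ n := by exact_mod_cast (Finset.card_le_univ T).trans_eq (by simp)
      have hθ := chernoffParam_nonneg (d := d) (s := S.card) ht htn
      have hone : 1 ≤ f 1 T S A + f (-1) T S A := by
        rcases lt_abs.1 hlt with h | h
        · have : 1 ≤ f 1 T S A := Real.one_le_exp (by nlinarith)
          linarith [hf0 (-1) T S A]
        · have : 1 ≤ f (-1) T S A := Real.one_le_exp (by nlinarith)
          linarith [hf0 1 T S A]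
      refine hone.trans ?_
      refine le_trans ?_ (Finset.single_le_sum (s := Finset.univ.filter Finset.Nonempty)
        (f := fun T => ∑ S : Finset (Fin n) with S.card ≤ T.card, (f 1 T S A + f (-1) T S A))
        (fun T _ => Finset.sum_nonneg fun S _ => (add_pos (hf0 _ _ _ _) (hf0 _ _ _ _)).le)
        (Finset.mem_filter.2 ⟨Finset.mem_univ T, hT⟩))
      exact Finset.single_le_sum
        (f := fun S => f 1 T S A + f (-1) T S A)
        (fun S _ => (add_pos (hf0 _ _ _ _) (hf0 _ _ _ _)).le)
        (Finset.mem_filter.2 ⟨Finset.mem_univ S, hST⟩)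
    · simp [weight_eq_zero_of_not_isGraph P hgr]
  have hsum : 1 ≤ prob P G + ∑ A, weight P A * Z A := by
    rw [← sum_weight P, prob, ← Finset.sum_add_distrib]
    exact Finset.sum_le_sum fun A _ => hbad A
  have hEZ : ∑ A, weight P A * Z A ≤ 2 * (n * (n : ℝ) ^ (-(κ - 2))) := by
    calc ∑ A, weight P A * Z A = ∑ T : Finset (Fin n) with T.Nonempty,
          ∑ S : Finset (Fin n) with S.card ≤ T.card,
            (∑ A, weight P A * f 1 T S A + ∑ A, weight P A * f (-1) T S A) := by
          simp_rw [hZ, Finset.mul_sum]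
          rw [Finset.sum_comm]
          refine Finset.sum_congr rfl fun T _ => ?_
          rw [Finset.sum_comm]
          refine Finset.sum_congr rfl fun S _ => ?_
          rw [← Finset.sum_add_distrib]
          exact Finset.sum_congr rfl fun A _ => mul_add _ _ _
      _ ≤ ∑ T : Finset (Fin n) with T.Nonempty, ∑ S : Finset (Fin n) with S.card ≤ T.card,
            2 * Real.exp (-(κ * (T.card * (1 + Real.log (n / T.card))))) := by
          refine Finset.sum_le_sum fun T hT => Finset.sum_le_sum fun S _ => ?_
          have hT := (Finset.mem_filter.1 hT).2
          have h1 := sum_weight_mul_exp_tail_le hsymm hP hp hd (κ := κ) (S := S) hT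
            (σ := 1) (by simp)
          have h2 := sum_weight_mul_exp_tail_le hsymm hP hp hd (κ := κ) (S := S) hT
            (σ := -1) (by simp)
          simp only [hf]
          linarith
      _ ≤ 2 * (n * (n : ℝ) ^ (-(κ - 2))) := by
          simp_rw [← Finset.mul_sum]
          gcongr
          exact sum_exp_neg_le (by linarith)
  have hn2 : (2 : ℝ) ≤ n := by exact_mod_cast hn
  have hpow : 2 * (n * (n : ℝ) ^ (-(κ - 2))) ≤ (n : ℝ) ^ (-c) := by
    have h1 : (n : ℝ) ^ (-c) = (n : ℝ) ^ 2 * (n : ℝ) ^ (-(κ - 2)) := by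
      rw [← Real.rpow_natCast, ← Real.rpow_add (by positivity)]
      congr 1
      rw [hκ]
      push_cast
      ring
    rw [h1, ← mul_assoc]
    gcongr
    nlinarith
  linarith

lemma abs_sum_mul_le_of_subset {ι : Type*} {S : Finset ι} {x f : ι → ℝ} {a B : ℝ} (ha : 0 ≤ a)
    (hx : ∀ u ∈ S, |x u| ≤ a) (hf : ∀ S' ⊆ S, |∑ u ∈ S', f u| ≤ B) :
    |∑ u ∈ S, x u * f u| ≤ 2 * a * B := by
  classical
  have h1 : ∑ u ∈ S, |f u| = ∑ u ∈ S with 0 ≤ f u, f u - ∑ u ∈ S with ¬ 0 ≤ f u, f u := by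
    rw [← Finset.sum_filter_add_sum_filter_not S (fun u => 0 ≤ f u) fun u => |f u|,
      sub_eq_add_neg, ← Finset.sum_neg_distrib]
    congr 1
    · exact Finset.sum_congr rfl fun u hu => abs_of_nonneg (Finset.mem_filter.1 hu).2
    · exact Finset.sum_congr rfl fun u hu =>
        abs_of_neg (not_le.1 (Finset.mem_filter.1 hu).2)
  have h2 := (abs_le.1 (hf _ (Finset.filter_subset (fun u => 0 ≤ f u) S))).2
  have h3 := (abs_le.1 (hf _ (Finset.filter_subset (fun u => ¬ 0 ≤ f u) S))).1
  calc |∑ u ∈ S, x u * f u| ≤ ∑ u ∈ S, |x u * f u| := Finset.abs_sum_le_sum_abs _ _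
    _ ≤ ∑ u ∈ S, a * |f u| := by
        refine Finset.sum_le_sum fun u hu => ?_
        rw [abs_mul]
        exact mul_le_mul_of_nonneg_right (hx u hu) (abs_nonneg _)
    _ = a * ∑ u ∈ S, |f u| := by rw [Finset.mul_sum]
    _ ≤ a * (2 * B) := by
        gcongr
        linarith
    _ = 2 * a * B := by ring

lemma abs_sum_sum_mul_le_of_subset {ι : Type*} {S T : Finset ι} {x y : ι → ℝ}
    {M : ι → ι → ℝ} {a b B : ℝ} (ha : 0 ≤ a) (hb : 0 ≤ b)
    (hx : ∀ u ∈ S, |x u| ≤ a) (hy : ∀ v ∈ T, |y v| ≤ b)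
    (hM : ∀ S' ⊆ S, ∀ T' ⊆ T, |∑ u ∈ S', ∑ v ∈ T', M u v| ≤ B) :
    |∑ u ∈ S, ∑ v ∈ T, x u * y v * M u v| ≤ 4 * a * b * B := by
  have h1 : ∑ u ∈ S, ∑ v ∈ T, x u * y v * M u v = ∑ u ∈ S, x u * ∑ v ∈ T, y v * M u v := by
    simp_rw [Finset.mul_sum, mul_assoc]
  rw [h1]
  refine (abs_sum_mul_le_of_subset (B := 2 * b * B) ha hx fun S' hS' => ?_).trans_eq (by ring)
  rw [Finset.sum_comm]
  simp_rw [← Finset.mul_sum]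
  refine abs_sum_mul_le_of_subset hb hy fun T' hT' => ?_
  rw [Finset.sum_comm]
  exact hM S' hS' T' hT'

lemma discScale_mono {n : ℕ} {d s t s' t' : ℝ} (hd : 0 ≤ d) (hs : 0 ≤ s) (ht : 0 ≤ t)
    (hss : s ≤ s') (htt : t ≤ t') : discScale n d s t ≤ discScale n d s' t' := by
  have hs' := hs.trans hss
  unfold discScale
  gcongr

lemma discScale_nonneg {n : ℕ} {d s t : ℝ} (ht : 0 ≤ t) : 0 ≤ discScale n d s t :=
  ht.trans (le_discScale ht)

/-- The sum of `2 ^ (-|i| / 2)` over all integers. -/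
noncomputable def levelConst : ℝ := ∑' i : ℤ, Real.sqrt (1 / 2) ^ i.natAbs

lemma sum_le_levelConst (I : Finset ℤ) : ∑ i ∈ I, Real.sqrt (1 / 2) ^ i.natAbs ≤ levelConst := by
  have hlt : Real.sqrt (1 / 2) < 1 := by
    rw [Real.sqrt_lt' one_pos]
    norm_num
  have hs := summable_geometric_of_lt_one (Real.sqrt_nonneg (1 / 2)) hlt
  refine Summable.sum_le_tsum I (fun i _ => by positivity) ?_
  exact Summable.of_nat_of_neg (by simpa using hs) (by simpa using hs)

lemma levelConst_nonneg : 0 ≤ levelConst := by simpa using sum_le_levelConst ∅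

lemma zpow_mul_cube_le {q : ℝ} (hq : 0 ≤ q) (hq1 : q ≤ 1) {i : ℤ}
    (hi : (2 : ℝ) ^ i * q ^ 2 ≤ 1) :
    (2 : ℝ) ^ i * q ^ 3 ≤ Real.sqrt (1 / 2) ^ i.natAbs := by
  have hsq : Real.sqrt (1 / 2) ^ 2 = (1 / 2 : ℝ) := Real.sq_sqrt (by norm_num)
  rcases Int.eq_nat_or_neg i with ⟨k, rfl | rfl⟩
  · simp only [zpow_natCast, Int.natAbs_natCast] at hi ⊢
    have h1 : q ≤ Real.sqrt (1 / 2) ^ k := by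
      rw [← pow_le_pow_iff_left₀ hq (by positivity) two_ne_zero, ← pow_mul, mul_comm k,
        pow_mul, hsq, one_div, inv_pow, ← one_div, le_div_iff₀ (by positivity)]
      linarith
    calc (2 : ℝ) ^ k * q ^ 3 = 2 ^ k * q ^ 2 * q := by ring
      _ ≤ 1 * q := by gcongr
      _ ≤ _ := by rwa [one_mul]
  · simp only [zpow_neg, zpow_natCast, Int.natAbs_neg, Int.natAbs_natCast]
    have h1 : (2 : ℝ)⁻¹ ≤ Real.sqrt (1 / 2) := by
      apply Real.le_sqrt_of_sq_le
      norm_num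
    calc ((2 : ℝ) ^ k)⁻¹ * q ^ 3 ≤ ((2 : ℝ) ^ k)⁻¹ * 1 := by
          gcongr
          exact pow_le_one₀ hq hq1
      _ = (2 : ℝ)⁻¹ ^ k := by rw [mul_one, inv_pow]
      _ ≤ _ := by gcongr

lemma sum_two_zpow_le (J : Finset ℤ) (i : ℤ) (m : ℕ) (hJ : ∀ j ∈ J, |i - j| ≤ m) :
    ∑ j ∈ J, (2 : ℝ) ^ j ≤ 2 ^ i * 2 ^ (m + 1) := by
  classical
  have hsub : J ⊆ (Finset.range (2 * m + 1)).image fun k : ℕ => i + m - k := by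
    intro j hj
    have := abs_le.1 (hJ j hj)
    refine Finset.mem_image.2 ⟨(i + m - j).toNat, Finset.mem_range.2 (by omega), by omega⟩
  calc ∑ j ∈ J, (2 : ℝ) ^ j
      ≤ ∑ j ∈ (Finset.range (2 * m + 1)).image fun k : ℕ => i + m - k, (2 : ℝ) ^ j :=
        Finset.sum_le_sum_of_subset_of_nonneg hsub fun _ _ _ => by positivity
    _ = ∑ k ∈ Finset.range (2 * m + 1), (2 : ℝ) ^ (i + m - k : ℤ) :=
        Finset.sum_image fun a _ b _ hab => by simpa using hab
    _ = 2 ^ i * 2 ^ m * ∑ k ∈ Finset.range (2 * m + 1), (1 / 2 : ℝ) ^ k := by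
        rw [Finset.mul_sum]
        refine Finset.sum_congr rfl fun k _ => ?_
        rw [zpow_sub₀ two_ne_zero, zpow_add₀ two_ne_zero]
        simp [div_eq_mul_inv]
    _ ≤ 2 ^ i * 2 ^ m * 2 := by
        gcongr
        exact sum_geometric_two_le _
    _ = 2 ^ i * 2 ^ (m + 1) := by rw [pow_succ]; ring

lemma card_le_of_abs_sub_le (J : Finset ℤ) (i : ℤ) (m : ℕ) (hJ : ∀ j ∈ J, |i - j| ≤ m) :
    (J.card : ℝ) ≤ 2 * m + 1 := by
  have hsub : J ⊆ Finset.Icc (i - m) (i + m) := by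
    intro j hj
    have := abs_le.1 (hJ j hj)
    exact Finset.mem_Icc.2 (by omega)
  have h := Finset.card_le_card hsub
  rw [Int.card_Icc] at h
  have : J.card ≤ 2 * m + 1 := by omega
  exact_mod_cast this

/-- Summation of the discrepancy scales over pairs of dyadic levels at distance at most `m`. -/
lemma sum_near_levels_le {n : ℕ} (hn : 0 < n) {d : ℝ} (hd : 0 ≤ d) (I : Finset ℤ) {s : ℤ → ℝ}
    (hs : ∀ i, 0 ≤ s i) (hsn : ∀ i, s i ≤ n) (hsum : ∑ i ∈ I, ((2 : ℝ) ^ i) ^ 2 * s i ≤ n)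
    (m : ℕ) :
    ∑ i ∈ I, ∑ j ∈ I with |i - j| ≤ m, (2 : ℝ) ^ i * 2 ^ j * discScale n d (s j) (s i) ≤
      n * (2 ^ (m + 1) + Real.sqrt d * Real.sqrt (2 * m + 1) * levelConst) := by
  have hn' : (0 : ℝ) < n := by exact_mod_cast hn
  set q : ℤ → ℝ := fun i => (s i / n) ^ (1 / 4 : ℝ) with hq
  have hq0 : ∀ i, 0 ≤ q i := fun i => Real.rpow_nonneg (div_nonneg (hs i) hn'.le) _
  have hq4 : ∀ i, s i = n * q i ^ 4 := by
    intro i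
    have : q i ^ 4 = s i / n := by
      rw [hq, ← Real.rpow_natCast, ← Real.rpow_mul (div_nonneg (hs i) hn'.le)]
      norm_num
    rw [this]
    field_simp
  have hq1 : ∀ i, q i ≤ 1 := fun i =>
    Real.rpow_le_one (div_nonneg (hs i) hn'.le) ((div_le_one hn').2 (hsn i)) (by norm_num)
  have hterm : ∀ i ∈ I, (2 : ℝ) ^ i * (Real.sqrt (s i) * q i) ≤
      Real.sqrt n * Real.sqrt (1 / 2) ^ i.natAbs := by
    intro i hi
    have h1 : ((2 : ℝ) ^ i) ^ 2 * s i ≤ n :=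
      (Finset.single_le_sum (f := fun i => ((2 : ℝ) ^ i) ^ 2 * s i)
        (fun i _ => mul_nonneg (by positivity) (hs i)) hi).trans hsum
    have h2 : (2 : ℝ) ^ i * q i ^ 2 ≤ 1 := by
      rw [hq4 i] at h1
      have h3 : ((2 : ℝ) ^ i * q i ^ 2) ^ 2 ≤ 1 := by
        refine le_of_mul_le_mul_left ?_ hn'
        linarith
      exact (sq_le_one_iff₀ (by positivity)).1 h3
    have h4 : Real.sqrt (s i) = Real.sqrt n * q i ^ 2 := by
      rw [hq4 i, Real.sqrt_mul hn'.le, show q i ^ 4 = (q i ^ 2) ^ 2 by ring,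
        Real.sqrt_sq (by positivity)]
    calc (2 : ℝ) ^ i * (Real.sqrt (s i) * q i) = Real.sqrt n * ((2 : ℝ) ^ i * q i ^ 3) := by
          rw [h4]; ring
      _ ≤ _ := by
          gcongr
          exact zpow_mul_cube_le (hq0 i) (hq1 i) h2
  have hinner : ∀ i : ℤ, ∑ j ∈ I with |i - j| ≤ m, (2 : ℝ) ^ j * Real.sqrt (s j) ≤
      Real.sqrt (2 * m + 1) * Real.sqrt n := by
    intro i
    rw [← Real.sqrt_mul (by positivity)]
    apply Real.le_sqrt_of_sq_le
    calc (∑ j ∈ I with |i - j| ≤ m, (2 : ℝ) ^ j * Real.sqrt (s j)) ^ 2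
        ≤ (I.filter fun j => |i - j| ≤ m).card *
            ∑ j ∈ I with |i - j| ≤ m, ((2 : ℝ) ^ j * Real.sqrt (s j)) ^ 2 :=
          sq_sum_le_card_mul_sum_sq
      _ ≤ (2 * m + 1) * ∑ j ∈ I, ((2 : ℝ) ^ j) ^ 2 * s j := by
          gcongr
          · exact card_le_of_abs_sub_le _ i m fun j hj => (Finset.mem_filter.1 hj).2
          · refine (Finset.sum_le_sum_of_subset_of_nonneg (Finset.filter_subset _ _)
              fun _ _ _ => by positivity).trans_eq (Finset.sum_congr rfl fun j _ => ?_)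
            rw [mul_pow, Real.sq_sqrt (hs j)]
      _ ≤ (2 * m + 1) * n := by gcongr
  have hsplit : ∀ i j : ℤ, (2 : ℝ) ^ i * 2 ^ j * discScale n d (s j) (s i) =
      (2 : ℝ) ^ i * s i * 2 ^ j +
        Real.sqrt d * ((2 : ℝ) ^ i * (Real.sqrt (s i) * q i)) * ((2 : ℝ) ^ j * Real.sqrt (s j)) := by
    intro i j
    rw [discScale, Real.sqrt_mul (mul_nonneg hd (hs j)), Real.sqrt_mul hd]
    ring
  simp_rw [hsplit, Finset.sum_add_distrib, ← Finset.mul_sum]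
  have hA : ∑ i ∈ I, (2 : ℝ) ^ i * s i * ∑ j ∈ I with |i - j| ≤ m, (2 : ℝ) ^ j ≤
      n * 2 ^ (m + 1) := by
    calc _ ≤ ∑ i ∈ I, (2 : ℝ) ^ i * s i * (2 ^ i * 2 ^ (m + 1)) := by
          refine Finset.sum_le_sum fun i _ => mul_le_mul_of_nonneg_left ?_
            (mul_nonneg (by positivity) (hs i))
          exact sum_two_zpow_le _ i m fun j hj => (Finset.mem_filter.1 hj).2
      _ = (∑ i ∈ I, ((2 : ℝ) ^ i) ^ 2 * s i) * 2 ^ (m + 1) := by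
          rw [Finset.sum_mul]
          exact Finset.sum_congr rfl fun i _ => by ring
      _ ≤ _ := by gcongr
  have hB : ∑ i ∈ I, Real.sqrt d * ((2 : ℝ) ^ i * (Real.sqrt (s i) * q i)) *
      ∑ j ∈ I with |i - j| ≤ m, (2 : ℝ) ^ j * Real.sqrt (s j) ≤
        n * (Real.sqrt d * Real.sqrt (2 * m + 1) * levelConst) := by
    calc _ ≤ ∑ i ∈ I, Real.sqrt d * (Real.sqrt n * Real.sqrt (1 / 2) ^ i.natAbs) *
          (Real.sqrt (2 * m + 1) * Real.sqrt n) := by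
          refine Finset.sum_le_sum fun i hi => ?_
          exact mul_le_mul (mul_le_mul_of_nonneg_left (hterm i hi) (Real.sqrt_nonneg _)) (hinner i)
            (Finset.sum_nonneg fun j _ => by positivity) (by positivity)
      _ = (Real.sqrt n * Real.sqrt n) * (Real.sqrt d * Real.sqrt (2 * m + 1)) *
            ∑ i ∈ I, Real.sqrt (1 / 2) ^ i.natAbs := by
          rw [Finset.mul_sum]
          exact Finset.sum_congr rfl fun i _ => by ring
      _ ≤ (Real.sqrt n * Real.sqrt n) * (Real.sqrt d * Real.sqrt (2 * m + 1)) * levelConst := by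
          gcongr
          exact sum_le_levelConst I
      _ = _ := by rw [Real.mul_self_sqrt hn'.le]; ring
  linarith

/-- A dyadic scale close to `√d`. -/
lemma exists_dyadic_scale {d : ℝ} (hd : 1 ≤ d) :
    ∃ m : ℕ, Real.sqrt d ≤ 2 ^ m ∧ (2 : ℝ) ^ m ≤ 2 * Real.sqrt d ∧
      (2 * m + 1 : ℝ) ≤ 4 * Real.log (Real.exp 1 * d) := by
  obtain ⟨k, hk1, hk2⟩ := exists_nat_pow_near (Real.one_le_sqrt.2 hd) (one_lt_two (α := ℝ))
  refine ⟨k + 1, hk2.le, by rw [pow_succ]; linarith, ?_⟩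
  have h1 : k * Real.log 2 ≤ Real.log d / 2 := by
    rw [← Real.log_sqrt (by linarith), ← Real.log_pow]
    exact Real.log_le_log (by positivity) hk1
  have h2 := Real.log_two_gt_d9
  have h3 : 0 ≤ Real.log d := Real.log_nonneg hd
  rw [Real.log_mul (Real.exp_pos 1).ne' (by linarith), Real.log_exp]
  push_cast
  have : (k : ℝ) * 0.5 ≤ k * Real.log 2 := by gcongr; linarith
  nlinarith

/-- A quadratic form is controlled by pairs of coordinates whose dyadic levels are close. -/
lemma abs_sum_far_levels_le {n : ℕ} {M : Fin n → Fin n → ℝ} (hM : ∀ u v, M u v = M v u)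
    {W : Fin n → ℝ} (hW : ∀ u, ∑ v, |M u v| ≤ W u) {z : Fin n → ℝ} {l : Fin n → ℤ}
    (hl : ∀ u, z u ≠ 0 → (2 : ℝ) ^ l u ≤ |z u|) (hl' : ∀ u, |z u| ≤ (2 : ℝ) ^ (l u + 1)) (m : ℕ) :
    |∑ u, ∑ v, if |l u - l v| ≤ m then 0 else z u * z v * M u v| ≤
      2 * (2 ^ m)⁻¹ * ∑ u, z u ^ 2 * W u := by
  have hfar : ∀ u v : Fin n, m < l v - l u → |z u * z v| ≤ (2 ^ m)⁻¹ * z v ^ 2 := by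
    intro u v h
    rcases eq_or_ne (z v) 0 with h0 | h0
    · simp [h0]
    have h1 : |z u| ≤ (2 ^ m)⁻¹ * |z v| := by
      calc |z u| ≤ (2 : ℝ) ^ (l u + 1) := hl' u
        _ ≤ (2 : ℝ) ^ (-(m : ℤ) + l v) :=
            zpow_le_zpow_right₀ (by norm_num) (by omega)
        _ = (2 ^ m)⁻¹ * 2 ^ l v := by rw [zpow_add₀ two_ne_zero, zpow_neg, zpow_natCast]
        _ ≤ (2 ^ m)⁻¹ * |z v| := by
            gcongr
            exact hl v h0
    calc |z u * z v| = |z u| * |z v| := abs_mul _ _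
      _ ≤ (2 ^ m)⁻¹ * |z v| * |z v| := by gcongr
      _ = (2 ^ m)⁻¹ * z v ^ 2 := by rw [mul_assoc, ← sq, sq_abs]
  have hterm : ∀ u v : Fin n, |if |l u - l v| ≤ m then 0 else z u * z v * M u v| ≤
      (2 ^ m)⁻¹ * (z u ^ 2 * |M u v|) + (2 ^ m)⁻¹ * (z v ^ 2 * |M u v|) := by
    intro u v
    split_ifs with h
    · rw [abs_zero]
      positivity
    · have h2 : |z u * z v| ≤ (2 ^ m)⁻¹ * z u ^ 2 + (2 ^ m)⁻¹ * z v ^ 2 := by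
        rcases lt_abs.1 (not_le.1 h) with h1 | h1
        · have := hfar v u h1
          rw [mul_comm (z v)] at this
          have : 0 ≤ ((2 : ℝ) ^ m)⁻¹ * z v ^ 2 := by positivity
          linarith
        · have := hfar u v (by linarith)
          have : 0 ≤ ((2 : ℝ) ^ m)⁻¹ * z u ^ 2 := by positivity
          linarith
      rw [abs_mul]
      refine (mul_le_mul_of_nonneg_right h2 (abs_nonneg _)).trans_eq (by ring)
  have hrow : ∑ u, ∑ v, z u ^ 2 * |M u v| ≤ ∑ u, z u ^ 2 * W u := by
    refine Finset.sum_le_sum fun u _ => ?_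
    rw [← Finset.mul_sum]
    gcongr
    exact hW u
  have hcol : ∑ u, ∑ v, z v ^ 2 * |M u v| = ∑ u, ∑ v, z u ^ 2 * |M u v| := by
    rw [Finset.sum_comm]
    exact Finset.sum_congr rfl fun u _ => Finset.sum_congr rfl fun v _ => by rw [hM]
  calc _ ≤ ∑ u, ∑ v, |if |l u - l v| ≤ m then 0 else z u * z v * M u v| :=
        (Finset.abs_sum_le_sum_abs _ _).trans
          (Finset.sum_le_sum fun u _ => Finset.abs_sum_le_sum_abs _ _)
    _ ≤ ∑ u, ∑ v, ((2 ^ m)⁻¹ * (z u ^ 2 * |M u v|) + (2 ^ m)⁻¹ * (z v ^ 2 * |M u v|)) :=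
        Finset.sum_le_sum fun u _ => Finset.sum_le_sum fun v _ => hterm u v
    _ = 2 * (2 ^ m)⁻¹ * ∑ u, ∑ v, z u ^ 2 * |M u v| := by
        rw [mul_assoc, two_mul]
        nth_rewrite 2 [← hcol]
        simp_rw [Finset.sum_add_distrib, Finset.mul_sum]
    _ ≤ _ := by gcongr

/-- Symmetric discrepancy bound for all pairs of vertex sets. -/
def HasDiscrepancy {n : ℕ} (M : Fin n → Fin n → ℝ) (d K : ℝ) : Prop :=
  ∀ S T : Finset (Fin n), |∑ u ∈ S, ∑ v ∈ T, M u v| ≤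
    K * (discScale n d S.card T.card + discScale n d T.card S.card)

lemma abs_sum_near_levels_le {n : ℕ} (hn : 0 < n) {M : Fin n → Fin n → ℝ} {d K : ℝ} (hd : 0 ≤ d)
    (hK : 0 ≤ K) (hdisc : HasDiscrepancy M d K) {z : Fin n → ℝ} (hz : ∑ u, z u ^ 2 = n)
    {l : Fin n → ℤ} (hl : ∀ u, z u ≠ 0 → (2 : ℝ) ^ l u ≤ |z u|)
    (hl' : ∀ u, |z u| ≤ (2 : ℝ) ^ (l u + 1)) (m : ℕ) :
    |∑ u, ∑ v, if |l u - l v| ≤ m then z u * z v * M u v else 0| ≤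
      32 * K * (n * (2 ^ (m + 1) + Real.sqrt d * Real.sqrt (2 * m + 1) * levelConst)) := by
  classical
  set U : Finset (Fin n) := Finset.univ.filter fun u => z u ≠ 0 with hU
  set I : Finset ℤ := U.image l with hI
  set S : ℤ → Finset (Fin n) := fun i => U.filter fun u => l u = i with hS
  set s : ℤ → ℝ := fun i => (S i).card with hs
  have hs0 : ∀ i, 0 ≤ s i := fun i => Nat.cast_nonneg _
  have hsn : ∀ i, s i ≤ n := fun i => by
    have : (S i).card ≤ n := (Finset.card_le_univ _).trans_eq (by simp)
    exact Nat.cast_le.2 this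
  have hsum : ∑ i ∈ I, ((2 : ℝ) ^ i) ^ 2 * s i ≤ n := by
    rw [← hz]
    calc ∑ i ∈ I, ((2 : ℝ) ^ i) ^ 2 * s i ≤ ∑ i ∈ I, ∑ u ∈ S i, z u ^ 2 := by
          refine Finset.sum_le_sum fun i _ => ?_
          rw [mul_comm, hs, ← nsmul_eq_mul, ← Finset.sum_const]
          refine Finset.sum_le_sum fun u hu => ?_
          obtain ⟨huU, rfl⟩ := Finset.mem_filter.1 hu
          rw [← sq_abs (z u)]
          gcongr
          exact hl u (Finset.mem_filter.1 huU).2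
      _ = ∑ u ∈ U, z u ^ 2 :=
          Finset.sum_fiberwise_of_maps_to (fun u hu => Finset.mem_image_of_mem l hu) _
      _ ≤ ∑ u, z u ^ 2 := Finset.sum_le_sum_of_subset_of_nonneg (Finset.filter_subset _ _)
          fun _ _ _ => sq_nonneg _
  have hdecomp : ∑ u, ∑ v, (if |l u - l v| ≤ m then z u * z v * M u v else 0) =
      ∑ i ∈ I, ∑ j ∈ I with |i - j| ≤ m, ∑ u ∈ S i, ∑ v ∈ S j, z u * z v * M u v := by
    have h1 : ∀ f : Fin n → ℝ, (∀ u, z u = 0 → f u = 0) → ∑ u, f u = ∑ i ∈ I, ∑ u ∈ S i, f u := by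
      intro f hf
      rw [Finset.sum_fiberwise_of_maps_to (fun u hu => Finset.mem_image_of_mem l hu), hU]
      refine (Finset.sum_filter_of_ne (p := fun u => z u ≠ 0) fun u _ hu h0 => hu (hf u h0)).symm
    rw [h1 _ fun u hu => by simp [hu]]
    refine Finset.sum_congr rfl fun i _ => ?_
    have h2 : ∀ u ∈ S i, (∑ v, if |l u - l v| ≤ m then z u * z v * M u v else 0) =
        ∑ j ∈ I, ∑ v ∈ S j, if |i - j| ≤ m then z u * z v * M u v else 0 := by
      intro u hu
      rw [h1 _ fun v hv => by simp [hv]]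
      refine Finset.sum_congr rfl fun j _ => Finset.sum_congr rfl fun v hv => ?_
      rw [(Finset.mem_filter.1 hu).2, (Finset.mem_filter.1 hv).2]
    rw [Finset.sum_congr rfl h2, Finset.sum_comm, Finset.sum_filter (fun j => |i - j| ≤ m)]
    refine Finset.sum_congr rfl fun j _ => ?_
    split_ifs <;> simp
  have hblock : ∀ i j : ℤ, |∑ u ∈ S i, ∑ v ∈ S j, z u * z v * M u v| ≤
      16 * K * ((2 : ℝ) ^ i * 2 ^ j * discScale n d (s j) (s i)) +
        16 * K * ((2 : ℝ) ^ i * 2 ^ j * discScale n d (s i) (s j)) := by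
    intro i j
    have hle : ∀ i : ℤ, ∀ u ∈ S i, |z u| ≤ (2 : ℝ) ^ (i + 1) := by
      intro i u hu
      rw [← (Finset.mem_filter.1 hu).2]
      exact hl' u
    refine (abs_sum_sum_mul_le_of_subset (by positivity) (by positivity) (hle i) (hle j)
      (B := K * (discScale n d (s i) (s j) + discScale n d (s j) (s i)))
      fun S' hS' T' hT' => ?_).trans_eq ?_
    · have h1 : (S'.card : ℝ) ≤ s i := Nat.cast_le.2 <| Finset.card_le_card hS'
      have h2 : (T'.card : ℝ) ≤ s j := Nat.cast_le.2 <| Finset.card_le_card hT'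
      refine (hdisc S' T').trans ?_
      gcongr
      · exact discScale_mono hd (Nat.cast_nonneg _) (Nat.cast_nonneg _) h1 h2
      · exact discScale_mono hd (Nat.cast_nonneg _) (Nat.cast_nonneg _) h2 h1
    · rw [zpow_add_one₀ two_ne_zero, zpow_add_one₀ two_ne_zero]
      ring
  have hswap : ∑ i ∈ I, ∑ j ∈ I with |i - j| ≤ m, (2 : ℝ) ^ i * 2 ^ j * discScale n d (s i) (s j) =
      ∑ i ∈ I, ∑ j ∈ I with |i - j| ≤ m, (2 : ℝ) ^ i * 2 ^ j * discScale n d (s j) (s i) := by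
    simp_rw [Finset.sum_filter]
    rw [Finset.sum_comm]
    refine Finset.sum_congr rfl fun i _ => Finset.sum_congr rfl fun j _ => ?_
    rw [abs_sub_comm, mul_comm ((2 : ℝ) ^ j)]
  rw [hdecomp]
  calc _ ≤ ∑ i ∈ I, ∑ j ∈ I with |i - j| ≤ m, |∑ u ∈ S i, ∑ v ∈ S j, z u * z v * M u v| :=
        (Finset.abs_sum_le_sum_abs _ _).trans
          (Finset.sum_le_sum fun u _ => Finset.abs_sum_le_sum_abs _ _)
    _ ≤ ∑ i ∈ I, ∑ j ∈ I with |i - j| ≤ m,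
          (16 * K * ((2 : ℝ) ^ i * 2 ^ j * discScale n d (s j) (s i)) +
            16 * K * ((2 : ℝ) ^ i * 2 ^ j * discScale n d (s i) (s j))) :=
        Finset.sum_le_sum fun i _ => Finset.sum_le_sum fun j _ => hblock i j
    _ = 32 * K * ∑ i ∈ I, ∑ j ∈ I with |i - j| ≤ m,
          (2 : ℝ) ^ i * 2 ^ j * discScale n d (s j) (s i) := by
        simp_rw [Finset.sum_add_distrib, ← Finset.mul_sum (a := 16 * K)]
        rw [hswap]
        ring
    _ ≤ _ := by
        gcongr
        exact sum_near_levels_le hn hd I hs0 hsn hsum m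

/-- The rate `√(log (e d) / d)`. -/
noncomputable def lapRate (d : ℝ) : ℝ := Real.sqrt (Real.log (Real.exp 1 * d) / d)

/-- The constant relating discrepancy and quadratic forms. -/
noncomputable def quadConst (K : ℝ) : ℝ := 2 + 32 * K * (4 + 2 * levelConst)

lemma quadConst_pos {K : ℝ} (hK : 0 ≤ K) : 0 < quadConst K := by
  have := levelConst_nonneg
  unfold quadConst
  positivity

lemma one_le_log_exp_mul {d : ℝ} (hd : 1 ≤ d) : 1 ≤ Real.log (Real.exp 1 * d) := by
  rw [Real.log_mul (Real.exp_pos 1).ne' (by linarith), Real.log_exp]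
  linarith [Real.log_nonneg hd]

lemma abs_quadForm_le_of_sum_sq_eq {n : ℕ} (hn : 0 < n) {M : Fin n → Fin n → ℝ}
    (hM : ∀ u v, M u v = M v u) {d K : ℝ} (hd : 1 ≤ d) (hK : 0 ≤ K) (hdisc : HasDiscrepancy M d K)
    {W : Fin n → ℝ} (hW : ∀ u, ∑ v, |M u v| ≤ W u) (hdW : ∀ u, d ≤ W u)
    {z : Fin n → ℝ} (hz : ∑ u, z u ^ 2 = n) :
    |∑ u, ∑ v, z u * z v * M u v| ≤ quadConst K * lapRate d * ∑ u, z u ^ 2 * W u := by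
  have hd0 : 0 ≤ d := by linarith
  set l : Fin n → ℤ := fun u => Int.log 2 |z u| with hldef
  have hl : ∀ u, z u ≠ 0 → (2 : ℝ) ^ l u ≤ |z u| := fun u hu => by
    simpa using Int.zpow_log_le_self (b := 2) one_lt_two (abs_pos.2 hu)
  have hl' : ∀ u, |z u| ≤ (2 : ℝ) ^ (l u + 1) := fun u => by
    simpa using (Int.lt_zpow_succ_log_self (b := 2) one_lt_two |z u|).le
  obtain ⟨m, hm1, hm2, hm3⟩ := exists_dyadic_scale hd
  have hfar := abs_sum_far_levels_le hM hW hl hl' m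
  have hnear := abs_sum_near_levels_le hn hd0 hK hdisc hz hl hl' m
  set Λ := Real.log (Real.exp 1 * d) with hΛ
  have hΛ1 : 1 ≤ Λ := one_le_log_exp_mul hd
  set Q := ∑ u, z u ^ 2 * W u with hQ
  have hQn : n * d ≤ Q := by
    rw [← hz, Finset.sum_mul]
    exact Finset.sum_le_sum fun u _ => mul_le_mul_of_nonneg_left (hdW u) (sq_nonneg _)
  have hsd : 0 < Real.sqrt d := Real.sqrt_pos.2 (by linarith)
  have hsΛ : 1 ≤ Real.sqrt Λ := Real.one_le_sqrt.2 hΛ1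
  have hrate : lapRate d = Real.sqrt Λ / Real.sqrt d := by
    rw [lapRate, Real.sqrt_div (by linarith)]
  have hnQ : n * Real.sqrt d ≤ Q / Real.sqrt d := by
    rw [le_div_iff₀ hsd, mul_assoc, Real.mul_self_sqrt hd0]
    exact hQn
  have hQ0 : 0 ≤ Q := le_trans (by positivity) hQn
  have hc := levelConst_nonneg
  have hsm : Real.sqrt (2 * m + 1) ≤ 2 * Real.sqrt Λ := by
    rw [show (2 : ℝ) * Real.sqrt Λ = Real.sqrt (4 * Λ) by
      rw [Real.sqrt_mul (by norm_num), show (4 : ℝ) = 2 ^ 2 by norm_num,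
        Real.sqrt_sq (by norm_num)]]
    exact Real.sqrt_le_sqrt hm3
  have hsplit : ∑ u, ∑ v, z u * z v * M u v =
      ∑ u, ∑ v, (if |l u - l v| ≤ m then z u * z v * M u v else 0) +
        ∑ u, ∑ v, if |l u - l v| ≤ m then 0 else z u * z v * M u v := by
    simp_rw [← Finset.sum_add_distrib]
    refine Finset.sum_congr rfl fun u _ => Finset.sum_congr rfl fun v _ => ?_
    split_ifs <;> ring
  have h1 : 2 * (2 ^ m)⁻¹ * Q ≤ 2 * (Real.sqrt Λ * (Q / Real.sqrt d)) := by
    calc 2 * (2 ^ m)⁻¹ * Q ≤ 2 * (Real.sqrt d)⁻¹ * Q := by gcongr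
      _ = 2 * (1 * (Q / Real.sqrt d)) := by rw [div_eq_mul_inv]; ring
      _ ≤ _ := by gcongr
  have h2 : n * (2 ^ (m + 1) + Real.sqrt d * Real.sqrt (2 * m + 1) * levelConst) ≤
      (4 + 2 * levelConst) * (Real.sqrt Λ * (Q / Real.sqrt d)) := by
    calc n * (2 ^ (m + 1) + Real.sqrt d * Real.sqrt (2 * m + 1) * levelConst)
        ≤ n * (4 * Real.sqrt d * Real.sqrt Λ +
            Real.sqrt d * (2 * Real.sqrt Λ) * levelConst) := by
          gcongr
          rw [pow_succ]
          nlinarith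
      _ = (4 + 2 * levelConst) * (Real.sqrt Λ * (n * Real.sqrt d)) := by ring
      _ ≤ _ := by gcongr
  rw [hsplit, hrate]
  calc _ ≤ 32 * K * (n * (2 ^ (m + 1) + Real.sqrt d * Real.sqrt (2 * m + 1) * levelConst)) +
        2 * (2 ^ m)⁻¹ * Q := (abs_add_le _ _).trans (add_le_add hnear hfar)
    _ ≤ 32 * K * ((4 + 2 * levelConst) * (Real.sqrt Λ * (Q / Real.sqrt d))) +
        2 * (Real.sqrt Λ * (Q / Real.sqrt d)) := by gcongr
    _ = quadConst K * (Real.sqrt Λ / Real.sqrt d) * Q := by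
        rw [quadConst]
        ring

lemma abs_quadForm_le {n : ℕ} {M : Fin n → Fin n → ℝ}
    (hM : ∀ u v, M u v = M v u) {d K : ℝ} (hd : 1 ≤ d) (hK : 0 ≤ K) (hdisc : HasDiscrepancy M d K)
    {W : Fin n → ℝ} (hW : ∀ u, ∑ v, |M u v| ≤ W u) (hdW : ∀ u, d ≤ W u) (z : Fin n → ℝ) :
    |∑ u, ∑ v, z u * z v * M u v| ≤ quadConst K * lapRate d * ∑ u, z u ^ 2 * W u := by
  rcases (Finset.sum_nonneg fun u _ => sq_nonneg (z u) :
    0 ≤ ∑ u, z u ^ 2).eq_or_lt with h0 | h0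
  · have hz : ∀ u, z u = 0 := fun u => by
      simpa using (Finset.sum_eq_zero_iff_of_nonneg fun u _ => sq_nonneg (z u)).1 h0.symm u
        (Finset.mem_univ u)
    simp [hz]
  · have hn : 0 < n := by
      rcases Nat.eq_zero_or_pos n with rfl | h
      · simp at h0
      · exact h
    have hn' : (0 : ℝ) < n := by exact_mod_cast hn
    set a : ℝ := Real.sqrt (n / ∑ u, z u ^ 2) with ha
    have ha2 : a ^ 2 = n / ∑ u, z u ^ 2 := Real.sq_sqrt (by positivity)
    have ha0 : 0 < a ^ 2 := by rw [ha2]; positivity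
    have h := abs_quadForm_le_of_sum_sq_eq hn hM hd hK hdisc hW hdW (z := fun u => a * z u) (by
      simp_rw [mul_pow, ← Finset.mul_sum, ha2]
      field_simp)
    have h1 : ∑ u, ∑ v, a * z u * (a * z v) * M u v = a ^ 2 * ∑ u, ∑ v, z u * z v * M u v := by
      simp_rw [Finset.mul_sum]
      exact Finset.sum_congr rfl fun u _ => Finset.sum_congr rfl fun v _ => by ring
    have h2 : ∑ u, (a * z u) ^ 2 * W u = a ^ 2 * ∑ u, z u ^ 2 * W u := by
      rw [Finset.mul_sum]
      exact Finset.sum_congr rfl fun u _ => by ring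
    rw [h1, h2, abs_mul, abs_of_pos ha0] at h
    refine le_of_mul_le_mul_left ?_ ha0
    linarith

/-- Polarization of a weighted bound on quadratic forms. -/
lemma abs_bilinForm_le {ι : Type*} [Fintype ι] {M : ι → ι → ℝ} (hM : ∀ u v, M u v = M v u)
    {W : ι → ℝ} {ε : ℝ}
    (hq : ∀ z : ι → ℝ, |∑ u, ∑ v, z u * z v * M u v| ≤ ε * ∑ u, z u ^ 2 * W u) (x y : ι → ℝ) :
    |∑ u, ∑ v, x u * y v * M u v| ≤ ε / 2 * (∑ u, x u ^ 2 * W u + ∑ u, y u ^ 2 * W u) := by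
  have h1 := hq fun u => x u + y u
  have h2 := hq fun u => x u - y u
  have hsymm : ∑ u, ∑ v, y u * x v * M u v = ∑ u, ∑ v, x u * y v * M u v := by
    rw [Finset.sum_comm]
    exact Finset.sum_congr rfl fun u _ => Finset.sum_congr rfl fun v _ => by rw [hM, mul_comm (y v)]
  have h3 : ∑ u, ∑ v, (x u + y u) * (x v + y v) * M u v -
      ∑ u, ∑ v, (x u - y u) * (x v - y v) * M u v = 4 * ∑ u, ∑ v, x u * y v * M u v := by
    rw [show (4 : ℝ) * ∑ u, ∑ v, x u * y v * M u v =
      2 * (∑ u, ∑ v, x u * y v * M u v) + 2 * ∑ u, ∑ v, x u * y v * M u v by ring]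
    nth_rewrite 2 [← hsymm]
    simp_rw [Finset.mul_sum, ← Finset.sum_sub_distrib, ← Finset.sum_add_distrib]
    exact Finset.sum_congr rfl fun u _ => Finset.sum_congr rfl fun v _ => by ring
  have h4 : ∑ u, (x u + y u) ^ 2 * W u + ∑ u, (x u - y u) ^ 2 * W u =
      2 * (∑ u, x u ^ 2 * W u + ∑ u, y u ^ 2 * W u) := by
    simp_rw [← Finset.sum_add_distrib, Finset.mul_sum]
    exact Finset.sum_congr rfl fun u _ => by ring
  have h5 : ε * ∑ u, (x u + y u) ^ 2 * W u + ε * ∑ u, (x u - y u) ^ 2 * W u =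
      ε * (2 * (∑ u, x u ^ 2 * W u + ∑ u, y u ^ 2 * W u)) := by rw [← mul_add, h4]
  rw [abs_le] at h1 h2 ⊢
  constructor <;> linarith [h1.1, h1.2, h2.1, h2.2]

/-- Weighted bound on the row sums of a matrix whose quadratic form is controlled. -/
lemma sum_rowSum_sq_div_le {ι : Type*} [Fintype ι] {M : ι → ι → ℝ} (hM : ∀ u v, M u v = M v u)
    {W D : ι → ℝ} {ε : ℝ} (hε : 0 < ε)
    (hq : ∀ z : ι → ℝ, |∑ u, ∑ v, z u * z v * M u v| ≤ ε * ∑ u, z u ^ 2 * W u)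
    (hD : ∀ u, 0 < D u) (hWD : ∀ u, W u ≤ D u) :
    ∑ u, (∑ v, M u v) ^ 2 / D u ≤ ε ^ 2 * ∑ u, W u := by
  set g : ι → ℝ := fun u => ∑ v, M u v with hg
  have h := (le_abs_self _).trans
    (abs_bilinForm_le hM hq (fun u => ε⁻¹ * (g u / D u)) fun _ => 1)
  have h1 : ∑ u, ∑ v, ε⁻¹ * (g u / D u) * 1 * M u v = ε⁻¹ * ∑ u, g u ^ 2 / D u := by
    rw [Finset.mul_sum]
    refine Finset.sum_congr rfl fun u _ => ?_
    rw [← Finset.mul_sum]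
    change _ * g u = _
    ring
  have h2 : ∑ u, (ε⁻¹ * (g u / D u)) ^ 2 * W u ≤ ε⁻¹ ^ 2 * ∑ u, g u ^ 2 / D u := by
    rw [Finset.mul_sum]
    refine Finset.sum_le_sum fun u _ => ?_
    have hDu := hD u
    calc (ε⁻¹ * (g u / D u)) ^ 2 * W u ≤ (ε⁻¹ * (g u / D u)) ^ 2 * D u := by
          gcongr
          exact hWD u
      _ = _ := by field_simp
  simp only [one_pow, one_mul] at h
  rw [h1] at h
  have h3 : ε⁻¹ * ∑ u, g u ^ 2 / D u ≤
      ε / 2 * (ε⁻¹ ^ 2 * ∑ u, g u ^ 2 / D u + ∑ u, W u) := by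
    refine h.trans ?_
    gcongr
  have h4 := mul_le_mul_of_nonneg_left h3 hε.le
  have h5 : ε * (ε / 2 * (ε⁻¹ ^ 2 * ∑ u, g u ^ 2 / D u + ∑ u, W u)) =
      (∑ u, g u ^ 2 / D u) / 2 + ε ^ 2 / 2 * ∑ u, W u := by field_simp
  rw [h5, mul_inv_cancel_left₀ hε.ne'] at h4
  linarith

lemma sq_inv_sqrt_sub_inv_sqrt_le {D E τ : ℝ} (hτ : 0 < τ) (hD : 0 < D) (hE : τ ≤ E) :
    ((Real.sqrt D)⁻¹ - (Real.sqrt E)⁻¹) ^ 2 ≤ (D - E) ^ 2 / D / τ ^ 2 := by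
  have hE0 : 0 < E := hτ.trans_le hE
  obtain ⟨a, ha, rfl⟩ : ∃ a : ℝ, 0 < a ∧ D = a ^ 2 :=
    ⟨Real.sqrt D, Real.sqrt_pos.2 hD, (Real.sq_sqrt hD.le).symm⟩
  obtain ⟨b, hb, rfl⟩ : ∃ b : ℝ, 0 < b ∧ E = b ^ 2 :=
    ⟨Real.sqrt E, Real.sqrt_pos.2 hE0, (Real.sq_sqrt hE0.le).symm⟩
  rw [Real.sqrt_sq ha.le, Real.sqrt_sq hb.le]
  have h1 : (a⁻¹ - b⁻¹) ^ 2 = (a - b) ^ 2 / (a ^ 2 * b ^ 2) := by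
    field_simp
    ring
  have h2 : (a ^ 2 - b ^ 2) ^ 2 / a ^ 2 / τ ^ 2 =
      (a - b) ^ 2 * (a + b) ^ 2 / (a ^ 2 * τ ^ 2) := by
    field_simp
    ring
  rw [h1, h2, div_le_div_iff₀ (by positivity) (by positivity)]
  have h3 : τ ^ 2 ≤ (a + b) ^ 2 * b ^ 2 := by
    calc τ ^ 2 ≤ (b ^ 2) ^ 2 := by gcongr
      _ = b ^ 2 * b ^ 2 := sq _
      _ ≤ (a + b) ^ 2 * b ^ 2 := by
          gcongr
          linarith
  calc (a - b) ^ 2 * (a ^ 2 * τ ^ 2) = ((a - b) ^ 2 * a ^ 2) * τ ^ 2 := by ring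
    _ ≤ ((a - b) ^ 2 * a ^ 2) * ((a + b) ^ 2 * b ^ 2) := by gcongr
    _ = _ := by ring

/-- Effect on a bilinear form of changing the normalization of its coefficients. -/
lemma abs_sum_renormalize_le {ι : Type*} [Fintype ι] {R : ι → ι → ℝ} {r β : ℝ}
    (hR : ∀ u v, |R u v| ≤ r) (hr : 0 ≤ r) {a b : ι → ℝ} (ha : ∀ u, |a u| ≤ β)
    (hb : ∀ u, |b u| ≤ β) {x y : ι → ℝ} (hx : ∑ u, x u ^ 2 = 1) (hy : ∑ u, y u ^ 2 = 1) :
    |∑ u, ∑ v, y u * x v * (R u v * ((a u - b u) * a v + b u * (a v - b v)))| ≤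
      2 * r * β * Real.sqrt (Fintype.card ι) * Real.sqrt (∑ u, (a u - b u) ^ 2) := by
  have hcs : ∀ z : ι → ℝ, ∑ u, z u ^ 2 = 1 →
      ∑ u, |z u| * |a u - b u| ≤ Real.sqrt (∑ u, (a u - b u) ^ 2) ∧
        ∑ u, |z u| ≤ Real.sqrt (Fintype.card ι) := by
    intro z hz
    constructor
    · have := Real.sum_mul_le_sqrt_mul_sqrt Finset.univ (fun u => |z u|) fun u => |a u - b u|
      simpa only [sq_abs, hz, Real.sqrt_one, one_mul] using this
    · have := Real.sum_mul_le_sqrt_mul_sqrt Finset.univ (fun u => |z u|) fun _ => 1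
      simpa [sq_abs, hz] using this
  have hterm : ∀ u v, |y u * x v * (R u v * ((a u - b u) * a v + b u * (a v - b v)))| ≤
      r * β * ((|y u| * |a u - b u|) * |x v|) + r * β * (|y u| * (|x v| * |a v - b v|)) := by
    intro u v
    have hβ : 0 ≤ β := (abs_nonneg _).trans (ha u)
    have h1 : |(a u - b u) * a v + b u * (a v - b v)| ≤
        |a u - b u| * β + β * |a v - b v| := by
      refine (abs_add_le _ _).trans ?_
      rw [abs_mul, abs_mul]
      gcongr
      · exact ha v
      · exact hb u
    rw [abs_mul, abs_mul, abs_mul (R u v)]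
    calc _ ≤ |y u| * |x v| * (r * (|a u - b u| * β + β * |a v - b v|)) := by
          gcongr
          exact hR u v
      _ = _ := by ring
  rcases isEmpty_or_nonempty ι with hι | ⟨⟨u₀⟩⟩
  · simp
  have hβ : 0 ≤ β := (abs_nonneg _).trans (ha u₀)
  have hsum : ∀ f g : ι → ℝ, ∑ u, ∑ v, r * β * (f u * g v) = r * β * ((∑ u, f u) * ∑ v, g v) := by
    intro f g
    rw [Finset.sum_mul_sum]
    simp_rw [Finset.mul_sum]
  calc _ ≤ ∑ u, ∑ v, |y u * x v * (R u v * ((a u - b u) * a v + b u * (a v - b v)))| :=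
        (Finset.abs_sum_le_sum_abs _ _).trans
          (Finset.sum_le_sum fun u _ => Finset.abs_sum_le_sum_abs _ _)
    _ ≤ ∑ u, ∑ v, (r * β * ((|y u| * |a u - b u|) * |x v|) +
          r * β * (|y u| * (|x v| * |a v - b v|))) :=
        Finset.sum_le_sum fun u _ => Finset.sum_le_sum fun v _ => hterm u v
    _ = r * β * ((∑ u, |y u| * |a u - b u|) * ∑ v, |x v|) +
          r * β * ((∑ u, |y u|) * ∑ v, |x v| * |a v - b v|) := by
        rw [← hsum, ← hsum]
        simp_rw [Finset.sum_add_distrib]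
    _ ≤ r * β * (Real.sqrt (∑ u, (a u - b u) ^ 2) * Real.sqrt (Fintype.card ι)) +
          r * β * (Real.sqrt (Fintype.card ι) * Real.sqrt (∑ u, (a u - b u) ^ 2)) := by
        gcongr
        exacts [(hcs y hy).1, (hcs x hx).2, (hcs y hy).2, (hcs x hx).1]
    _ = _ := by ring

/-- Stability of degree normalization under a perturbation with controlled quadratic form. -/
lemma abs_sum_normalized_sub_le {n : ℕ} (hn : 0 < n) {M R : Fin n → Fin n → ℝ}
    (hM : ∀ u v, M u v = M v u) {W D E : Fin n → ℝ} {ε τ c : ℝ} (hε : 0 < ε) (hτ : 0 < τ)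
    (hq : ∀ z : Fin n → ℝ, |∑ u, ∑ v, z u * z v * M u v| ≤ ε * ∑ u, z u ^ 2 * W u)
    (hWD : ∀ u, W u ≤ D u) (hD : ∀ u, τ ≤ D u) (hE : ∀ u, τ ≤ E u)
    (hDE : ∀ u, D u - E u = ∑ v, M u v) (hR : ∀ u v, |R u v| ≤ 2 * τ / n)
    (hW : ∑ u, W u ≤ c * (n * τ)) {x y : Fin n → ℝ} (hx : ∑ u, x u ^ 2 = 1)
    (hy : ∑ u, y u ^ 2 = 1) :
    |∑ u, ∑ v, y u * x v * ((R u v + M u v) / Real.sqrt (D u * D v) -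
      R u v / Real.sqrt (E u * E v))| ≤ (1 + 4 * Real.sqrt c) * ε := by
  have hn' : (0 : ℝ) < n := by exact_mod_cast hn
  have hD0 : ∀ u, 0 < D u := fun u => hτ.trans_le (hD u)
  have hE0 : ∀ u, 0 < E u := fun u => hτ.trans_le (hE u)
  set a : Fin n → ℝ := fun u => (Real.sqrt (D u))⁻¹ with ha
  set b : Fin n → ℝ := fun u => (Real.sqrt (E u))⁻¹ with hb
  have ha2 : ∀ u, a u ^ 2 * W u ≤ 1 := by
    intro u
    rw [ha, inv_pow, Real.sq_sqrt (hD0 u).le, inv_mul_le_iff₀ (hD0 u), mul_one]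
    exact hWD u
  have hnorm : ∀ z : Fin n → ℝ, ∑ u, z u ^ 2 = 1 → ∑ u, (z u * a u) ^ 2 * W u ≤ 1 := by
    intro z hz
    rw [← hz]
    refine Finset.sum_le_sum fun u _ => ?_
    calc (z u * a u) ^ 2 * W u = z u ^ 2 * (a u ^ 2 * W u) := by ring
      _ ≤ z u ^ 2 * 1 := by
          gcongr
          exact ha2 u
      _ = z u ^ 2 := mul_one _
  have hfirst : |∑ u, ∑ v, (y u * a u) * (x v * a v) * M u v| ≤ ε := by
    refine (abs_bilinForm_le hM hq _ _).trans ?_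
    calc _ ≤ ε / 2 * (1 + 1) := by
          gcongr
          exacts [hnorm y hy, hnorm x hx]
      _ = ε := by ring
  have hδ : ∑ u, (a u - b u) ^ 2 ≤ c * ε ^ 2 * n / τ := by
    calc ∑ u, (a u - b u) ^ 2 ≤ ∑ u, (∑ v, M u v) ^ 2 / D u / τ ^ 2 := by
          refine Finset.sum_le_sum fun u _ => ?_
          rw [← hDE u]
          exact sq_inv_sqrt_sub_inv_sqrt_le hτ (hD0 u) (hE u)
      _ = (∑ u, (∑ v, M u v) ^ 2 / D u) / τ ^ 2 := by rw [Finset.sum_div]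
      _ ≤ ε ^ 2 * (c * (n * τ)) / τ ^ 2 := by
          gcongr
          exact (sum_rowSum_sq_div_le hM hε hq hD0 hWD).trans (by gcongr)
      _ = _ := by field_simp
  have hbound : ∀ F : Fin n → ℝ, (∀ u, τ ≤ F u) → ∀ u,
      |(Real.sqrt (F u))⁻¹| ≤ (Real.sqrt τ)⁻¹ := by
    intro F hF u
    have := Real.sqrt_pos.2 hτ
    rw [abs_of_nonneg (by positivity)]
    gcongr
    exact hF u
  have hsecond := abs_sum_renormalize_le hR (by positivity) (hbound D hD) (hbound E hE) hx hy
  have hsplit : ∑ u, ∑ v, y u * x v * ((R u v + M u v) / Real.sqrt (D u * D v) -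
      R u v / Real.sqrt (E u * E v)) = ∑ u, ∑ v, (y u * a u) * (x v * a v) * M u v +
        ∑ u, ∑ v, y u * x v * (R u v * ((a u - b u) * a v + b u * (a v - b v))) := by
    simp_rw [← Finset.sum_add_distrib]
    refine Finset.sum_congr rfl fun u _ => Finset.sum_congr rfl fun v _ => ?_
    rw [Real.sqrt_mul (hD0 u).le, Real.sqrt_mul (hE0 u).le, div_eq_mul_inv, div_eq_mul_inv,
      mul_inv, mul_inv]
    ring
  have hc : 0 ≤ c * ε ^ 2 * n / τ := (Finset.sum_nonneg fun u _ => sq_nonneg _).trans hδ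
  have hsq : 2 * (2 * τ / n) * (Real.sqrt τ)⁻¹ * Real.sqrt n * Real.sqrt (c * ε ^ 2 * n / τ) =
      4 * Real.sqrt c * ε := by
    have hs := Real.sqrt_pos.2 hτ
    have hsn := Real.sqrt_pos.2 hn'
    rw [Real.sqrt_div' _ hτ.le, Real.sqrt_mul' _ hn'.le, Real.sqrt_mul' _ (sq_nonneg ε),
      Real.sqrt_sq hε.le]
    have h1 := Real.mul_self_sqrt hτ.le
    have h2 := Real.mul_self_sqrt hn'.le
    field_simp
    rw [Real.sq_sqrt hτ.le, Real.sq_sqrt hn'.le]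
    ring
  rw [hsplit]
  refine (abs_add_le _ _).trans ?_
  have h1 : 2 * (2 * τ / n) * (Real.sqrt τ)⁻¹ * Real.sqrt (Fintype.card (Fin n)) *
      Real.sqrt (∑ u, (a u - b u) ^ 2) ≤ 4 * Real.sqrt c * ε := by
    rw [← hsq, Fintype.card_fin]
    gcongr
  linarith [hsecond.trans h1]

lemma opNorm_le {n : ℕ} {M : Matrix (Fin n) (Fin n) ℝ} {B : ℝ} (hB : 0 ≤ B)
    (h : ∀ x y : Fin n → ℝ, ∑ u, x u ^ 2 = 1 → ∑ u, y u ^ 2 = 1 →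
      |∑ u, ∑ v, y u * x v * M u v| ≤ B) : opNorm M ≤ B := by
  refine Real.sSup_le ?_ hB
  rintro t ⟨x, hx, rfl⟩
  have hx' : ∑ u, x u ^ 2 = 1 := by
    rwa [sqnorm, Real.sqrt_eq_one] at hx
  set w := M.mulVec x with hw
  set r := sqnorm w with hr
  have hr0 : 0 ≤ r := Real.sqrt_nonneg _
  have hr2 : ∑ u, w u ^ 2 = r ^ 2 :=
    (Real.sq_sqrt (Finset.sum_nonneg fun u _ => sq_nonneg _)).symm
  rcases hr0.eq_or_lt with h0 | h0
  · rw [← h0]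
    exact hB
  have h1 := (le_abs_self _).trans (h x (fun u => w u / r) hx' (by
    simp_rw [div_pow, ← Finset.sum_div]
    rw [hr2, div_self (by positivity)]))
  have h2 : ∑ u, ∑ v, w u / r * x v * M u v = r := by
    have : ∀ u, ∑ v, w u / r * x v * M u v = w u ^ 2 / r := by
      intro u
      simp_rw [mul_assoc, ← Finset.mul_sum]
      have : ∑ v, x v * M u v = w u := by
        rw [hw]
        simp only [Matrix.mulVec, dotProduct]
        exact Finset.sum_congr rfl fun v _ => mul_comm _ _
      rw [this]
      ring
    simp_rw [this, ← Finset.sum_div]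
    rw [hr2]
    field_simp
  rwa [h2] at h1

lemma le_pmax {n : ℕ} {P : Matrix (Fin n) (Fin n) ℝ} (hP : ∀ u v, 0 ≤ P u v ∧ P u v ≤ 1)
    (u v : Fin n) : P u v ≤ pmax P := by
  refine le_csSup ⟨1, ?_⟩ ⟨u, v, rfl⟩
  rintro x ⟨u, v, rfl⟩
  exact (hP u v).2

lemma pmax_nonneg {n : ℕ} {P : Matrix (Fin n) (Fin n) ℝ} (hP : ∀ u v, 0 ≤ P u v ∧ P u v ≤ 1) :
    0 ≤ pmax P := by
  refine Real.sSup_nonneg ?_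
  rintro x ⟨u, v, rfl⟩
  exact (hP u v).1

lemma prob_nonneg {n : ℕ} {P : Matrix (Fin n) (Fin n) ℝ} (hP : ∀ u v, 0 ≤ P u v ∧ P u v ≤ 1)
    (S : Set (Adj n)) : 0 ≤ prob P S :=
  Finset.sum_nonneg fun A _ => Set.indicator_nonneg (fun A _ => weight_nonneg hP A) A

lemma prob_mono {n : ℕ} {P : Matrix (Fin n) (Fin n) ℝ} (hP : ∀ u v, 0 ≤ P u v ∧ P u v ≤ 1)
    {S T : Set (Adj n)} (h : S ⊆ T) : prob P S ≤ prob P T :=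
  Finset.sum_le_sum fun A _ =>
    Set.indicator_le_indicator_of_subset h (fun A => weight_nonneg hP A) A

lemma hasDiscrepancy_of_lowDiscrepancy {n : ℕ} {P : Matrix (Fin n) (Fin n) ℝ}
    (hsymm : ∀ u v, P u v = P v u) (hP : ∀ u v, 0 ≤ P u v ∧ P u v ≤ 1) {d K : ℝ} (hK : 0 ≤ K)
    {A : Adj n} (hA : IsGraph A) (h : LowDiscrepancy P d K A) :
    HasDiscrepancy (fun u v => aVal A u v - P u v) d (K + 1) := by
  have hM : ∀ u v, aVal A u v - P u v = aVal A v u - P v u := by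
    intro u v
    rw [hsymm u v, aVal, aVal, hA.2 u v]
  have key : ∀ S T : Finset (Fin n), S.card ≤ T.card →
      |∑ u ∈ S, ∑ v ∈ T, (aVal A u v - P u v)| ≤ (K + 1) * discScale n d S.card T.card := by
    intro S T hST
    rcases T.eq_empty_or_nonempty with rfl | hT
    · have := discScale_nonneg (n := n) (d := d) (s := S.card) (le_refl (0 : ℝ))
      simp only [Finset.sum_empty, Finset.sum_const_zero, abs_zero, Finset.card_empty,
        Nat.cast_zero]
      positivity
    have hsplit : ∑ u ∈ S, ∑ v ∈ T, (aVal A u v - P u v) =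
        centredEdges P S T A + ∑ u ∈ S, if u ∈ T then -P u u else 0 := by
      rw [centredEdges, ← Finset.sum_add_distrib]
      refine Finset.sum_congr rfl fun u _ => ?_
      rw [← Finset.sum_ite_eq T u fun v => -P u v, ← Finset.sum_add_distrib]
      refine Finset.sum_congr rfl fun v _ => ?_
      split_ifs with huv
      · subst huv
        simp [aVal, hA.1 u]
      · ring
    have hdiag : |∑ u ∈ S, if u ∈ T then -P u u else 0| ≤ S.card := by
      refine (Finset.abs_sum_le_sum_abs _ _).trans ?_
      rw [← nsmul_one, ← Finset.sum_const]
      refine Finset.sum_le_sum fun u _ => ?_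
      split_ifs
      · rw [abs_neg, abs_of_nonneg (hP u u).1]
        exact (hP u u).2
      · simp
    have h1 : (S.card : ℝ) ≤ discScale n d S.card T.card :=
      (Nat.cast_le.2 hST).trans (le_discScale (Nat.cast_nonneg _))
    rw [hsplit, add_mul, one_mul]
    exact (abs_add_le _ _).trans (add_le_add (h S T hST hT) (hdiag.trans h1))
  intro S T
  have h1 := discScale_nonneg (n := n) (d := d) (s := S.card) (t := T.card) (Nat.cast_nonneg _)
  have h2 := discScale_nonneg (n := n) (d := d) (s := T.card) (t := S.card) (Nat.cast_nonneg _)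
  rcases le_total S.card T.card with hST | hST
  · refine (key S T hST).trans ?_
    gcongr
    linarith
  · rw [Finset.sum_comm]
    simp_rw [fun u v => hM v u]
    refine (key T S hST).trans ?_
    gcongr
    linarith

/-- Deterministic bound on the regularized Laplacian of a graph of low discrepancy. -/
lemma opNorm_lap_sub_le {n : ℕ} (hn : 0 < n) {P : Matrix (Fin n) (Fin n) ℝ}
    (hsymm : ∀ u v, P u v = P v u) (hP : ∀ u v, 0 ≤ P u v ∧ P u v ≤ 1) {d K : ℝ} (hd : 1 ≤ d)
    (hPd : ∀ u v, P u v ≤ d / n) (hK : 0 ≤ K) {A : Adj n} (hA : IsGraph A)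
    (h : LowDiscrepancy P d K A) {τ : ℝ} (hτ : d ≤ τ) :
    opNorm (lap (addReg A τ) - lap (fun u v => P u v + τ / n)) ≤
      (1 + 4 * Real.sqrt (4 * (K + 1) + 2)) * (quadConst (K + 1) * lapRate d) := by
  have hn' : (0 : ℝ) < n := by exact_mod_cast hn
  have hτ0 : 0 < τ := by linarith
  set M : Fin n → Fin n → ℝ := fun u v => aVal A u v - P u v with hMdef
  have hM : ∀ u v, M u v = M v u := by
    intro u v
    simp only [hMdef, aVal]
    rw [hsymm u v, hA.2 u v]
  have hdisc : HasDiscrepancy M d (K + 1) := hasDiscrepancy_of_lowDiscrepancy hsymm hP hK hA h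
  have haVal : ∀ u v, 0 ≤ aVal A u v := by
    intro u v
    rw [aVal]
    split_ifs <;> norm_num
  have hdeg : ∀ u, 0 ≤ degree A u := fun u => Finset.sum_nonneg fun v _ => haVal u v
  have hProw : ∀ u, ∑ v, P u v ≤ d := by
    intro u
    refine (Finset.sum_le_sum fun v _ => hPd u v).trans_eq ?_
    simp
    field_simp
  have hW : ∀ u, ∑ v, |M u v| ≤ degree A u + d := by
    intro u
    calc ∑ v, |M u v| ≤ ∑ v, (aVal A u v + P u v) := by
          refine Finset.sum_le_sum fun v _ => abs_le.2 ⟨?_, ?_⟩ <;>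
            linarith [haVal u v, (hP u v).1]
      _ ≤ degree A u + d := by
          rw [Finset.sum_add_distrib]
          exact add_le_add_right (hProw u) _
  have hWd : ∀ u, d ≤ degree A u + d := fun u => by linarith [hdeg u]
  have hq := abs_quadForm_le hM hd (by positivity) hdisc hW hWd
  have hrate : 0 < lapRate d :=
    Real.sqrt_pos.2 (div_pos (by linarith [one_le_log_exp_mul hd]) (by linarith))
  have hε : 0 < quadConst (K + 1) * lapRate d := mul_pos (quadConst_pos (by positivity)) hrate
  have htotal : ∑ u, ∑ v, M u v ≤ 4 * (K + 1) * (n * τ) := by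
    have h1 := (le_abs_self _).trans (hdisc Finset.univ Finset.univ)
    have h2 : discScale n d n n ≤ 2 * (n * τ) := by
      have h3 : Real.sqrt (d * n * n) ≤ n * τ := by
        rw [mul_assoc, Real.sqrt_mul (by linarith), Real.sqrt_mul_self hn'.le, mul_comm]
        gcongr
        refine (Real.sqrt_le_left (by linarith)).2 ?_
        nlinarith
      rw [discScale, div_self hn'.ne', Real.one_rpow]
      nlinarith
    simp only [Finset.card_univ, Fintype.card_fin] at h1
    nlinarith
  have hWsum : ∑ u, (degree A u + d) ≤ (4 * (K + 1) + 2) * (n * τ) := by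
    have h1 : ∑ u, degree A u = ∑ u, ∑ v, M u v + ∑ u, ∑ v, P u v := by
      simp [hMdef, degree]
    have h2 : ∑ u, ∑ v, P u v ≤ n * τ := by
      refine (Finset.sum_le_sum fun u _ => (hProw u).trans hτ).trans_eq ?_
      simp
    rw [Finset.sum_add_distrib, h1]
    simp only [Finset.sum_const, Finset.card_univ, Fintype.card_fin, nsmul_eq_mul]
    nlinarith
  have hrowA : ∀ u, ∑ w, addReg A τ u w = degree A u + τ := by
    intro u
    simp only [addReg, Finset.sum_add_distrib, degree]
    simp
    field_simp
  have hrowP : ∀ u, ∑ w, (P u w + τ / n) = ∑ w, P u w + τ := by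
    intro u
    rw [Finset.sum_add_distrib]
    simp
    field_simp
  refine opNorm_le (by positivity) fun x y hx hy => ?_
  have key := abs_sum_normalized_sub_le hn hM (R := fun u v => P u v + τ / n)
    (D := fun u => degree A u + τ) (E := fun u => ∑ w, P u w + τ) hε hτ0 hq
    (fun u => by linarith) (fun u => by linarith [hdeg u])
    (fun u => by
      have := Finset.sum_nonneg fun w (_ : w ∈ Finset.univ) => (hP u w).1
      linarith)
    (fun u => by simp [hMdef, degree])
    (fun u v => by
      have h1 : 0 ≤ P u v + τ / n := add_nonneg (hP u v).1 (by positivity)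
      have h2 : d / n ≤ τ / n := by gcongr
      rw [abs_of_nonneg h1, two_mul, add_div]
      linarith [hPd u v])
    hWsum hx hy
  convert key using 6 with u _ v _
  simp only [Matrix.sub_apply, lap, hrowA, hrowP]
  congr 2
  simp only [addReg, hMdef]
  ring

/-- Lemma 6 (operator norm bound for the regularized Laplacian). -/
theorem statement_15 (C' : ℝ) (hC' : 0 < C') :
    ∃ C C1 C2 : ℝ, 0 < C ∧ 0 < C1 ∧ C1 < C2 ∧
      ∀ (n : ℕ) (P : Matrix (Fin n) (Fin n) ℝ),
        (∀ u v, P u v = P v u) → (∀ u v, 0 ≤ P u v ∧ P u v ≤ 1) →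
        1 - (n : ℝ) ^ (-C') ≤ prob P
          { A | ∀ τ : ℝ, C1 * ((n : ℝ) * pmax P + 1) ≤ τ →
              τ ≤ C2 * ((n : ℝ) * pmax P + 1) →
              opNorm (lap (addReg A τ) - lap (fun u v => P u v + τ / n)) ≤
                C * Real.sqrt
                  (Real.log (Real.exp 1 * ((n : ℝ) * pmax P + 1)) /
                    ((n : ℝ) * pmax P + 1)) } := by
  set K : ℝ := 8 * (C' + 4) + 2 with hKdef
  have hK : 0 ≤ K := by positivity
  have hquad := quadConst_pos (show 0 ≤ K + 1 by positivity)
  set C : ℝ := (1 + 4 * Real.sqrt (4 * (K + 1) + 2)) * quadConst (K + 1) with hC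
  have hC0 : 0 < C := by positivity
  refine ⟨C, 1, 2, hC0, one_pos, one_lt_two, fun n P hsymm hP => ?_⟩
  rcases Nat.eq_zero_or_pos n with rfl | hn
  · have hset : { A : Adj 0 | ∀ τ : ℝ, 1 * (((0 : ℕ) : ℝ) * pmax P + 1) ≤ τ →
        τ ≤ 2 * (((0 : ℕ) : ℝ) * pmax P + 1) →
        opNorm (lap (addReg A τ) - lap (fun u v => P u v + τ / ((0 : ℕ) : ℝ))) ≤
          C * Real.sqrt (Real.log (Real.exp 1 * (((0 : ℕ) : ℝ) * pmax P + 1)) /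
            (((0 : ℕ) : ℝ) * pmax P + 1)) } = Set.univ :=
      Set.eq_univ_of_forall fun A τ _ _ =>
        opNorm_le (mul_nonneg hC0.le (Real.sqrt_nonneg _)) fun x y hx _ => by simp at hx
    rw [hset, prob, Set.indicator_univ, sum_weight]
    exact sub_le_self _ (by positivity)
  rcases (Nat.succ_le_of_lt hn).eq_or_lt with rfl | hn2
  · simpa using prob_nonneg hP _
  have hn' : (0 : ℝ) < n := by exact_mod_cast hn
  have hp := pmax_nonneg hP
  have hd : 1 ≤ (n : ℝ) * pmax P + 1 := le_add_of_nonneg_left (by positivity)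
  have hPd : ∀ u v, P u v ≤ ((n : ℝ) * pmax P + 1) / n := by
    intro u v
    rw [le_div_iff₀ hn']
    nlinarith [le_pmax hP u v]
  refine (one_sub_le_prob_lowDiscrepancy hn2 hsymm hP hPd (by linarith) hC').trans
    (prob_mono hP ?_)
  rintro A ⟨hA, hlow⟩ τ hτ _
  refine (opNorm_lap_sub_le hn hsymm hP hd hPd hK hA hlow (by linarith)).trans_eq ?_
  rw [hC, lapRate]
  ring

end SBM
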